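/- Let q be an odd prime power, let G = GL(2, 𝔽_q) be the general linear group of degree 2 over the field with q elements, and let P be a Sylow 2-subgroup of G. Then for every irreducible complex character χ of G, the restriction χ_P is a sum of characters of the form λ^P induced from irreducible characters λ of subgroups Q ≤ P with χ(1)_2 = |P : Q|. -/

import Mathlib

open scoped Classical

/-- The induced character (as a class function formula): for `f` a function on a
subgroup `H` of a finite group `G`, `inducedChar H f g = (1/|H|) ∑_{x ∈ G, xgx⁻¹ ∈ H} f (xgx⁻¹)`. -/
noncomputable def inducedChar {G : Type*} [Group G] [Fintype G] (H : Subgroup G)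
    (f : H → ℂ) : G → ℂ :=
  fun g => (Fintype.card H : ℂ)⁻¹ *
    ∑ x : G, if h : x * g * x⁻¹ ∈ H then f ⟨x * g * x⁻¹, h⟩ else 0

/-- `χ` is the character of an irreducible complex representation of `G`. -/
def IsIrreducibleCharacter {G : Type} [Group G] (χ : G → ℂ) : Prop :=
  ∃ V : FDRep ℂ G, CategoryTheory.Simple V ∧ χ = FDRep.character V

/-- The restriction of `χ` (a character of degree `d` of the ambient group `G`) to the
subgroup `P` is a sum of characters `λ^P` induced from irreducible characters `λ` of
subgroups `Q ≤ P` satisfying `d_p = |P : Q|` (the `p`-part of the degree equals the index). -/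
def SumInducedProperty (p : ℕ) {G : Type} [Group G] [Fintype G] (P : Subgroup G)
    (χ : G → ℂ) (d : ℕ) : Prop :=
  ∃ (n : ℕ) (Q : Fin n → Subgroup ↥P) (lam : (i : Fin n) → ↥(Q i) → ℂ),
    (∀ i, IsIrreducibleCharacter (lam i)) ∧
    (∀ i, p ^ (d.factorization p) = (Q i).index) ∧
    (∀ x : ↥P, χ ↑x = ∑ i, inducedChar (Q i) (lam i) x)

open Representation Module

/-- sum of induced characters -/
def SI (m : ℕ) {P : Type} [Group P] [Fintype P] (f : P → ℂ) : Prop :=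
  ∃ (n : ℕ) (Q : Fin n → Subgroup P) (lam : (i : Fin n) → ↥(Q i) → ℂ),
    (∀ i, IsIrreducibleCharacter (lam i)) ∧
    (∀ i, m = (Q i).index) ∧
    (∀ x : P, f x = ∑ i, inducedChar (Q i) (lam i) x)

theorem SI_zero (m : ℕ) {P : Type} [Group P] [Fintype P] : SI m (0 : P → ℂ) :=
  ⟨0, Fin.elim0, fun i => i.elim0, fun i => i.elim0, fun i => i.elim0, fun x => by simp⟩

theorem SI_add {m : ℕ} {P : Type} [Group P] [Fintype P] {f g : P → ℂ}
    (hf : SI m f) (hg : SI m g) : SI m (f + g) := by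
  obtain ⟨n, Q, l, h1, h2, h3⟩ := hf
  obtain ⟨n', Q', l', h1', h2', h3'⟩ := hg
  let A : Fin n ⊕ Fin n' → (Σ Q : Subgroup P, (Q → ℂ)) :=
    Sum.elim (fun i => ⟨Q i, l i⟩) (fun i => ⟨Q' i, l' i⟩)
  let e := (finSumFinEquiv : Fin n ⊕ Fin n' ≃ _)
  refine ⟨n + n', fun i => (A (e.symm i)).1, fun i => (A (e.symm i)).2, ?_, ?_, ?_⟩
  · have key : ∀ j, IsIrreducibleCharacter (A j).2 := by
      rintro (j | j)
      · exact h1 j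
      · exact h1' j
    intro i; exact key (e.symm i)
  · have key : ∀ j, m = (A j).1.index := by
      rintro (j | j)
      · exact h2 j
      · exact h2' j
    intro i; exact key (e.symm i)
  · intro x
    rw [Equiv.sum_comp e.symm (fun j => inducedChar (A j).1 (A j).2 x)]
    simp [A, h3, h3']

theorem SI_sum {m : ℕ} {P : Type} [Group P] [Fintype P] {ι : Type*} (s : Finset ι)
    (f : ι → P → ℂ) (h : ∀ i ∈ s, SI m (f i)) : SI m (∑ i ∈ s, f i) := by
  induction s using Finset.induction_on with
  | empty => simpa using SI_zero m
  | insert a s ha ih =>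
    rw [Finset.sum_insert ha]
    exact SI_add (h a (by simp)) (ih fun i hi => h i (by simp [hi]))

theorem SI_nsmul {m : ℕ} {P : Type} [Group P] [Fintype P] {f : P → ℂ} (n : ℕ)
    (h : SI m f) : SI m (n • f) := by
  have := SI_sum (Finset.range n) (fun _ => f) (fun _ _ => h)
  simpa using this

theorem inducedChar_add {P : Type} [Group P] [Fintype P] (Q : Subgroup P) (f g : Q → ℂ) :
    inducedChar Q (f + g) = inducedChar Q f + inducedChar Q g := by
  ext x
  simp only [inducedChar, Pi.add_apply]
  rw [← mul_add, ← Finset.sum_add_distrib]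
  congr 1
  refine Finset.sum_congr rfl fun y _ => ?_
  split_ifs <;> simp

theorem inducedChar_zero {P : Type} [Group P] [Fintype P] (Q : Subgroup P) :
    inducedChar Q (0 : Q → ℂ) = 0 := by
  ext x
  simp [inducedChar]

noncomputable instance instInvCard (G : Type) [Group G] [Finite G] : Invertible (Nat.card G : ℂ) :=
  invertibleOfNonzero (by exact_mod_cast Nat.card_pos.ne')

theorem irr_char {Q : Type} [Group Q] [Finite Q] {V : Type} [AddCommGroup V] [Module ℂ V]
    [FiniteDimensional ℂ V] (ρ : Representation ℂ Q V) [IsIrreducible ρ] :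
    IsIrreducibleCharacter ρ.character := by
  have := Fintype.ofFinite Q
  refine ⟨FDRep.of ρ, ?_, rfl⟩
  rw [FDRep.simple_iff_char_is_norm_one]
  have h := Representation.char_orthonormal ρ ρ
  rw [if_pos ⟨Representation.Equiv.refl ρ⟩] at h
  have h0 : (Nat.card Q : ℂ) ≠ 0 := by exact_mod_cast Nat.card_pos.ne'
  field_simp at h
  exact h

theorem exists_decomp {Q : Type} [Group Q] [Finite Q] {V : Type} [AddCommGroup V] [Module ℂ V]
    [FiniteDimensional ℂ V] (ρ : Representation ℂ Q V) (W : Subrepresentation ρ) :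
    ∃ W' : Subrepresentation ρ, IsCompl W.toSubmodule W'.toSubmodule ∧
      ρ.character = W.toRepresentation.character + W'.toRepresentation.character := by
  obtain ⟨W', h⟩ := exists_isCompl W
  have hc : IsCompl W.toSubmodule W'.toSubmodule := by
    constructor
    · rw [disjoint_iff, ← Subrepresentation.toSubmodule_inf, h.inf_eq_bot]; rfl
    · rw [codisjoint_iff, ← Subrepresentation.toSubmodule_sup, h.sup_eq_top]; rfl
  refine ⟨W', hc, ?_⟩
  ext g
  have e := Submodule.prodEquivOfIsCompl _ _ hc
  have := LinearMap.trace_conj' (LinearMap.prodMap (W.toRepresentation g) (W'.toRepresentation g))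
    (Submodule.prodEquivOfIsCompl _ _ hc)
  rw [LinearMap.trace_prodMap'] at this
  simp only [Pi.add_apply, Representation.character]
  rw [← this]
  congr 1
  ext v
  obtain ⟨⟨a, b⟩, rfl⟩ := (Submodule.prodEquivOfIsCompl _ _ hc).surjective v
  rw [LinearEquiv.conj_apply_apply]
  simp [Subrepresentation.toRepresentation]

theorem char_induction {Q : Type} [Group Q] [Finite Q] (p : (Q → ℂ) → Prop) (h0 : p 0)
    (hadd : ∀ f g, p f → p g → p (f + g))
    (hirr : ∀ (V : Type) [AddCommGroup V] [Module ℂ V] [FiniteDimensional ℂ V]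
      (ρ : Representation ℂ Q V) [IsIrreducible ρ], p ρ.character)
    {V : Type} [AddCommGroup V] [Module ℂ V]
    [FiniteDimensional ℂ V] (ρ : Representation ℂ Q V) : p ρ.character := by
  induction hn : finrank ℂ V using Nat.strong_induction_on generalizing V with
  | _ n ih =>
    by_cases hV : Subsingleton V
    · convert h0
      ext g
      have : ρ g = 0 := Subsingleton.elim _ _
      simp [Representation.character, this]
    rw [not_subsingleton_iff_nontrivial] at hV
    by_cases hi : IsIrreducible ρ
    · exact hirr V ρ
    have : ∃ W : Subrepresentation ρ, W ≠ ⊥ ∧ W ≠ ⊤ := by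
      by_contra! hcon
      apply hi
      have : Nontrivial (Subrepresentation ρ) := by
        refine ⟨⊥, ⊤, fun h => ?_⟩
        have : (⊥ : Submodule ℂ V) = ⊤ := congrArg Subrepresentation.toSubmodule h
        exact bot_ne_top this
      exact ⟨fun W => by
        by_cases h : W = ⊥
        · exact Or.inl h
        · exact Or.inr (hcon W h)⟩
    obtain ⟨W, hb, ht⟩ := this
    obtain ⟨W', hc, hch⟩ := exists_decomp ρ W
    have hb' : W.toSubmodule ≠ ⊥ := fun h => hb (Subrepresentation.toSubmodule_injective h)
    have ht' : W.toSubmodule ≠ ⊤ := fun h => ht (Subrepresentation.toSubmodule_injective h)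
    have h1 := Submodule.finrank_lt ht'
    have h2 := Submodule.finrank_add_eq_of_isCompl hc
    have h3 : 0 < finrank ℂ W.toSubmodule := Nat.pos_of_ne_zero fun h =>
      hb' (Submodule.finrank_eq_zero.1 h)
    rw [hch]
    exact hadd _ _ (ih _ (by omega) W.toRepresentation rfl) (ih _ (by omega) W'.toRepresentation rfl)

theorem SI_ind {m : ℕ} {P : Type} [Group P] [Fintype P] (Q : Subgroup P) (hm : m = Q.index)
    {V : Type} [AddCommGroup V] [Module ℂ V]
    [FiniteDimensional ℂ V] (ρ : Representation ℂ Q V) : SI m (inducedChar Q ρ.character) := by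
  refine char_induction (fun f => SI m (inducedChar Q f)) ?_ ?_ ?_ ρ
  · rw [inducedChar_zero]; exact SI_zero m
  · intro f g hf hg
    rw [inducedChar_add]; exact SI_add hf hg
  · intro V _ _ _ ρ _
    exact ⟨1, fun _ => Q, fun _ => ρ.character, fun _ => irr_char ρ, fun _ => hm, fun x => by simp⟩

/-- linear character as representation -/
noncomputable def linRep {Q : Type} [Group Q] (θ : Q →* ℂ) : Representation ℂ Q ℂ where
  toFun g := θ g • LinearMap.id
  map_one' := by ext; simp
  map_mul' x y := by ext; simp [mul_comm]

theorem linRep_char {Q : Type} [Group Q] (θ : Q →* ℂ) : (linRep θ).character = θ := by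
  ext g
  simp [Representation.character, linRep]

theorem SI_lin {m : ℕ} {P : Type} [Group P] [Fintype P] (Q : Subgroup P) (hm : m = Q.index)
    (θ : Q →* ℂ) : SI m (inducedChar Q θ) := by
  rw [← linRep_char]
  exact SI_ind Q hm _

/-- simple implies irreducible -/
theorem isIrred_of_simple {Q : Type} [Group Q] [Finite Q] (V : FDRep ℂ Q)
    (hV : CategoryTheory.Simple V) : IsIrreducible (V.ρ : Representation ℂ Q V) := by
  have := Fintype.ofFinite Q
  have h := (FDRep.simple_iff_char_is_norm_one V).1 hV
  have key := Representation.card_inv_mul_sum_char_mul_char_eq_finrank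
    (V.ρ : Representation ℂ Q V) (V.ρ : Representation ℂ Q V)
  have h0 : (Nat.card Q : ℂ) ≠ 0 := by exact_mod_cast Nat.card_pos.ne'
  have h1 : finrank ℂ (IntertwiningMap (V.ρ : Representation ℂ Q V) V.ρ) = 1 := by
    have : ((finrank ℂ (IntertwiningMap (V.ρ : Representation ℂ Q V) V.ρ) : ℕ) : ℂ) = 1 := by
      rw [← key]
      have : ∑ g, Representation.character V.ρ g * Representation.character V.ρ g⁻¹ = (Nat.card Q : ℂ) := by
        exact h
      rw [this]; field_simp
    exact_mod_cast this
  have hnt : Nontrivial V := by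
    by_contra hn
    rw [not_nontrivial_iff_subsingleton] at hn
    have hid : ∀ f : IntertwiningMap (V.ρ : Representation ℂ Q V) V.ρ, f = 0 := by
      intro f
      ext v
      exact Subsingleton.elim _ _
    have : Subsingleton (IntertwiningMap (V.ρ : Representation ℂ Q V) V.ρ) :=
      ⟨fun a b => by rw [hid a, hid b]⟩
    rw [finrank_zero_of_subsingleton] at h1
    omega
  have : Nontrivial (Subrepresentation (V.ρ : Representation ℂ Q V)) := by
    refine ⟨⊥, ⊤, fun h => ?_⟩
    have : (⊥ : Submodule ℂ V) = ⊤ := congrArg Subrepresentation.toSubmodule h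
    exact bot_ne_top this
  refine ⟨fun W => ?_⟩
  obtain ⟨W', hc, hch⟩ := exists_decomp (V.ρ : Representation ℂ Q V) W
  have e1 := Representation.card_inv_mul_sum_char_mul_char_eq_finrank W.toRepresentation W.toRepresentation
  have e2 := Representation.card_inv_mul_sum_char_mul_char_eq_finrank W.toRepresentation W'.toRepresentation
  have e3 := Representation.card_inv_mul_sum_char_mul_char_eq_finrank W'.toRepresentation W.toRepresentation
  have e4 := Representation.card_inv_mul_sum_char_mul_char_eq_finrank W'.toRepresentation W'.toRepresentation
  rw [h1, hch] at key
  have hsum : finrank ℂ (IntertwiningMap W.toRepresentation W.toRepresentation) +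
      finrank ℂ (IntertwiningMap W.toRepresentation W'.toRepresentation) +
      finrank ℂ (IntertwiningMap W'.toRepresentation W.toRepresentation) +
      finrank ℂ (IntertwiningMap W'.toRepresentation W'.toRepresentation) = 1 := by
    have : ((finrank ℂ (IntertwiningMap W.toRepresentation W.toRepresentation) +
      finrank ℂ (IntertwiningMap W.toRepresentation W'.toRepresentation) +
      finrank ℂ (IntertwiningMap W'.toRepresentation W.toRepresentation) +
      finrank ℂ (IntertwiningMap W'.toRepresentation W'.toRepresentation) : ℕ) : ℂ) = (1 : ℕ) := by
      rw [← key]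
      push_cast
      rw [← e1, ← e2, ← e3, ← e4, ← mul_add, ← mul_add, ← mul_add, ← Finset.sum_add_distrib,
        ← Finset.sum_add_distrib, ← Finset.sum_add_distrib]
      congr 1
      refine Finset.sum_congr rfl fun g _ => ?_
      simp only [Pi.add_apply]
      ring
    exact_mod_cast this
  have hz : ∀ (U : Subrepresentation (V.ρ : Representation ℂ Q V)),
      finrank ℂ (IntertwiningMap U.toRepresentation U.toRepresentation) = 0 → U.toSubmodule = ⊥ := by
    intro U hU
    by_contra hne
    have e5 := Representation.card_inv_mul_sum_char_mul_char_eq_finrank U.toRepresentation U.toRepresentation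
    obtain ⟨v, hv, hv0⟩ := (Submodule.ne_bot_iff _).1 hne
    have hfin : FiniteDimensional ℂ (IntertwiningMap U.toRepresentation U.toRepresentation) :=
      Module.Finite.of_injective
        ({ toFun := fun f => f.toLinearMap, map_add' := fun _ _ => rfl,
           map_smul' := fun _ _ => rfl } :
          IntertwiningMap U.toRepresentation U.toRepresentation →ₗ[ℂ]
            (U.toSubmodule →ₗ[ℂ] U.toSubmodule))
        (fun a b h => IntertwiningMap.toLinearMap_injective _ _ h)
    have := Module.finrank_zero_iff.1 hU
    have h2 : (1 : IntertwiningMap U.toRepresentation U.toRepresentation) = 0 := Subsingleton.elim _ _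
    have h3 := congrArg (fun f : IntertwiningMap U.toRepresentation U.toRepresentation =>
      f ⟨v, hv⟩) h2
    apply hv0
    simpa using congrArg Subtype.val h3
  by_cases hW : W = ⊥
  · exact Or.inl hW
  · right
    have hW1 : finrank ℂ (IntertwiningMap W.toRepresentation W.toRepresentation) ≠ 0 := fun h =>
      hW (Subrepresentation.toSubmodule_injective (hz W h))
    have := hz W' (by omega)
    rw [this] at hc
    exact Subrepresentation.toSubmodule_injective (eq_top_of_isCompl_bot hc)


theorem irr_top {G V : Type} [Group G] [AddCommGroup V] [Module ℂ V]
    (ρ : Representation ℂ G V) [IsIrreducible ρ] (W : Submodule ℂ V) (h0 : W ≠ ⊥)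
    (h : ∀ g, ∀ w ∈ W, ρ g w ∈ W) : W = ⊤ := by
  let W' : Subrepresentation ρ := ⟨W, fun g v hv => h g v hv⟩
  rcases eq_bot_or_eq_top W' with h1 | h1
  · exact absurd (congrArg Subrepresentation.toSubmodule h1) h0
  · exact congrArg Subrepresentation.toSubmodule h1

theorem irrChar_comap {A B : Type} [Group A] [Finite A] [Group B] [Finite B] (e : A ≃* B)
    {f : B → ℂ} (hf : IsIrreducibleCharacter f) : IsIrreducibleCharacter (fun a => f (e a)) := by
  have := Fintype.ofFinite A
  have := Fintype.ofFinite B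
  obtain ⟨V, hV, rfl⟩ := hf
  refine ⟨FDRep.of ((V.ρ : Representation ℂ B V).comp e.toMonoidHom), ?_, rfl⟩
  rw [FDRep.simple_iff_char_is_norm_one] at hV ⊢
  rw [Nat.card_congr e.toEquiv, ← hV]
  rw [← Equiv.sum_comp e.toEquiv]
  refine Finset.sum_congr rfl fun a _ => ?_
  have : (e.toEquiv a)⁻¹ = e.toEquiv a⁻¹ := by simp
  rw [this]
  rfl

theorem SI_comap {m : ℕ} {A B : Type} [Group A] [Fintype A] [Group B] [Fintype B] (e : A ≃* B)
    {f : B → ℂ} (hf : SI m f) : SI m (fun a => f (e a)) := by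
  obtain ⟨n, Q, l, h1, h2, h3⟩ := hf
  let E : ∀ i, (Q i).comap e.toMonoidHom ≃* Q i := fun i =>
    { toFun := fun x => ⟨e x.1, x.2⟩
      invFun := fun x => ⟨e.symm x.1, by simp⟩
      left_inv := fun x => Subtype.ext (by simp)
      right_inv := fun x => Subtype.ext (by simp)
      map_mul' := fun x y => Subtype.ext (map_mul e x.1 y.1) }
  refine ⟨n, fun i => (Q i).comap e.toMonoidHom, fun i a => l i (E i a), ?_, ?_, ?_⟩
  · intro i
    exact irrChar_comap (E i) (h1 i)
  · intro i
    rw [h2 i, Subgroup.index_comap_of_surjective _ e.surjective]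
  · intro x
    show f (e x) = _
    rw [h3]
    refine Finset.sum_congr rfl fun i _ => ?_
    simp only [inducedChar]
    rw [Fintype.card_congr (E i).toEquiv, ← Equiv.sum_comp e.toEquiv]
    congr 1
    refine Finset.sum_congr rfl fun y _ => ?_
    have hy : e.toEquiv y * e x * (e.toEquiv y)⁻¹ = e (y * x * y⁻¹) := by simp
    by_cases h : e (y * x * y⁻¹) ∈ Q i
    · rw [dif_pos (hy ▸ h), dif_pos (show y * x * y⁻¹ ∈ (Q i).comap e.toMonoidHom from h)]
      congr 1
      exact Subtype.ext hy
    · rw [dif_neg (hy ▸ h), dif_neg (show ¬ y * x * y⁻¹ ∈ (Q i).comap e.toMonoidHom from h)]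

theorem inducedChar_top {P : Type} [Group P] [Fintype P] (f : P → ℂ)
    (hf : ∀ x g, f (x * g * x⁻¹) = f g) :
    inducedChar (⊤ : Subgroup P) (fun x => f x) = f := by
  ext g
  simp only [inducedChar, Subgroup.mem_top, dite_true, hf]
  simp

theorem SI_top {P : Type} [Group P] [Fintype P] {V : Type} [AddCommGroup V] [Module ℂ V]
    [FiniteDimensional ℂ V] (ρ : Representation ℂ P V) : SI 1 ρ.character := by
  have := SI_ind (m := 1) (⊤ : Subgroup P) (by simp) (ρ.comp (⊤ : Subgroup P).subtype)
  have h2 := inducedChar_top ρ.character (fun x g => by rw [Representation.char_conj])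
  rw [← h2]
  exact this

/-- monomial representation -/
noncomputable def monRep {K J : Type} [Group K] [MulAction K J] (c : K → J → ℂ)
    (c1 : ∀ j, c 1 j = 1) (cm : ∀ g h j, c (g * h) j = c g (h • j) * c h j) :
    Representation ℂ K (J → ℂ) where
  toFun g :=
    { toFun := fun f j => c g (g⁻¹ • j) * f (g⁻¹ • j)
      map_add' := fun f f' => by ext; simp [mul_add]
      map_smul' := fun t f => by ext; simp; ring }
  map_one' := by ext; simp [c1]
  map_mul' g h := by
    ext f j
    simp [cm, mul_smul, mul_assoc]

theorem monRep_char {K J : Type} [Group K] [MulAction K J] [Fintype J] (c : K → J → ℂ)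
    (c1 : ∀ j, c 1 j = 1) (cm : ∀ g h j, c (g * h) j = c g (h • j) * c h j) (g : K) :
    (monRep c c1 cm).character g = ∑ j, if g • j = j then c g j else 0 := by
  rw [Representation.character, LinearMap.trace_eq_matrix_trace ℂ (Pi.basisFun ℂ J), Matrix.trace]
  refine Finset.sum_congr rfl fun j _ => ?_
  simp only [Matrix.diag_apply, LinearMap.toMatrix_apply, Pi.basisFun_apply, Pi.basisFun_repr, monRep,
    MonoidHom.coe_mk, OneHom.coe_mk, LinearMap.coe_mk, AddHom.coe_mk]
  rw [Pi.single_apply]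
  by_cases h : g • j = j
  · have h' : g⁻¹ • j = j := by rw [inv_smul_eq_iff, h]
    simp [h, h']
  · have h' : g⁻¹ • j ≠ j := fun hh => h (by rw [inv_smul_eq_iff] at hh; exact hh.symm)
    simp [h, h']

theorem SI_orbit {P I : Type} [Group P] [Fintype P] [MulAction P I] [Fintype I] (c : P → I → ℂ)
    (c1 : ∀ j, c 1 j = 1) (cm : ∀ g h j, c (g * h) j = c g (h • j) * c h j) (i0 : I)
    (K : Subgroup P) (hK : MulAction.stabilizer P i0 ≤ K) {m : ℕ} (hm : m = K.index) :
    SI m (fun g => ∑ j, if j ∈ MulAction.orbit P i0 then (if g • j = j then c g j else 0) else 0) := by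
  let c' : K → MulAction.orbit K i0 → ℂ := fun k j => c k j
  have c1' : ∀ j, c' 1 j = 1 := fun j => c1 _
  have cm' : ∀ g h j, c' (g * h) j = c' g (h • j) * c' h j := fun g h j => cm _ _ _
  have key := SI_ind K hm (monRep c' c1' cm')
  have mK : ∀ x y : P, x • y • i0 ∈ MulAction.orbit K i0 ↔ x * y ∈ K := by
    intro x y
    constructor
    · rintro ⟨k, hk⟩
      have : (k : P)⁻¹ * (x * y) ∈ MulAction.stabilizer P i0 := by
        rw [MulAction.mem_stabilizer_iff, mul_smul, mul_smul, ← hk]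
        exact inv_smul_smul (k : P) i0
      have := K.mul_mem k.2 (hK this)
      simpa using this
    · intro h
      exact ⟨⟨x * y, h⟩, by rw [← mul_smul]; rfl⟩
  have stab : ∀ (h : P) (j : I), j ∈ MulAction.orbit K i0 → h • j = j → h ∈ K := by
    rintro h j ⟨k, rfl⟩ hh
    have : (k:P)⁻¹ * h * k ∈ K := hK (by
      rw [MulAction.mem_stabilizer_iff, mul_smul, mul_smul, inv_smul_eq_iff]; exact hh)
    have := K.mul_mem (K.mul_mem k.2 this) (K.inv_mem k.2)
    simpa [mul_assoc] using this
  convert key using 1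
  ext g
  simp only [inducedChar]
  have e1 : ∀ x : P, (if h : x * g * x⁻¹ ∈ K then
      (monRep c' c1' cm').character ⟨x * g * x⁻¹, h⟩ else 0) =
      ∑ j : I, if x • j ∈ MulAction.orbit K i0 ∧ g • j = j then c g j else 0 := by
    intro x
    have e2 : (if h : x * g * x⁻¹ ∈ K then
      (monRep c' c1' cm').character ⟨x * g * x⁻¹, h⟩ else 0) =
      ∑ j : I, if j ∈ MulAction.orbit K i0 ∧ (x * g * x⁻¹) • j = j then c (x * g * x⁻¹) j else 0 := by
      split_ifs with h
      · rw [monRep_char]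
        have e5 := Finset.sum_subtype (F := inferInstanceAs (Fintype (MulAction.orbit K i0))) (p := fun j => j ∈ MulAction.orbit K i0)
          (Finset.univ.filter (fun j => j ∈ MulAction.orbit K i0)) (by simp)
          (fun j => if (x * g * x⁻¹) • j = j then c (x * g * x⁻¹) j else 0)
        rw [Finset.sum_filter] at e5
        simp only [ite_and]
        rw [e5]
        refine Finset.sum_congr rfl fun j _ => ?_
        simp only [c', Subtype.ext_iff]
        rfl
      · symm
        refine Finset.sum_eq_zero fun j _ => ?_
        rw [if_neg]
        rintro ⟨h1, h2⟩
        exact h (stab _ _ h1 h2)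
    rw [e2, ← Equiv.sum_comp (MulAction.toPerm x)]
    refine Finset.sum_congr rfl fun j _ => ?_
    simp only [MulAction.toPerm_apply]
    have e3 : (x * g * x⁻¹) • x • j = x • g • j := by
      rw [mul_smul, mul_smul, inv_smul_smul]
    rw [e3]
    simp only [smul_left_cancel_iff]
    by_cases hg : g • j = j
    · have : c (x * g * x⁻¹) (x • j) = c g j := by
        rw [cm, cm, inv_smul_smul, hg, mul_comm (c x j), mul_assoc]
        have h4 := cm x x⁻¹ (x • j)
        rw [inv_smul_smul, mul_inv_cancel, c1] at h4
        rw [← h4, mul_one]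
      rw [this]
    · simp [hg]
  rw [Finset.sum_congr rfl fun x _ => e1 x, Finset.sum_comm, Finset.mul_sum]
  refine Finset.sum_congr rfl fun j _ => ?_
  by_cases hg : g • j = j
  · simp only [hg, if_true, and_true]
    split_ifs with hj
    · obtain ⟨y, rfl⟩ := hj
      simp only [mK]
      rw [← Equiv.sum_comp (Equiv.mulRight y⁻¹)]
      simp only [Equiv.coe_mulRight, inv_mul_cancel_right]
      rw [← Finset.sum_filter, Finset.sum_const, nsmul_eq_mul, ← mul_assoc]
      have : (Finset.univ.filter (fun x => x ∈ K)).card = Fintype.card K := by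
        rw [Fintype.card_subtype]
      rw [this, inv_mul_cancel₀, one_mul]
      exact_mod_cast Fintype.card_ne_zero
    · symm
      rw [Finset.sum_eq_zero, mul_zero]
      intro x _
      rw [if_neg]
      rintro ⟨k, hk⟩
      apply hj
      refine ⟨x⁻¹ * k, ?_⟩
      simp only [mul_smul]
      rw [inv_smul_eq_iff, ← hk]; rfl
  · simp [hg]

theorem lemmaM {P I : Type} [Group P] [Fintype P] (hP : IsPGroup 2 P) [MulAction P I] [Fintype I]
    (c : P → I → ℂ)
    (c1 : ∀ j, c 1 j = 1) (cm : ∀ g h j, c (g * h) j = c g (h • j) * c h j) (k : ℕ)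
    (hk : ∀ i : I, 2 ^ k ∣ (MulAction.stabilizer P i).index) :
    SI (2 ^ k) (fun g => ∑ j, if g • j = j then c g j else 0) := by
  have hK : ∀ i : I, ∃ K : Subgroup P, MulAction.stabilizer P i ≤ K ∧ 2 ^ k = K.index := by
    intro i
    obtain ⟨N, hN⟩ := (IsPGroup.iff_card (p := 2)).1 hP
    obtain ⟨s, hs⟩ := (IsPGroup.iff_card (p := 2)).1 (hP.to_subgroup (MulAction.stabilizer P i))
    have h1 := (MulAction.stabilizer P i).card_mul_index
    obtain ⟨t, ht⟩ := hk i
    have hle : s + k ≤ N := by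
      have : 2 ^ (s + k) ∣ 2 ^ N := by
        rw [← hN, ← h1, hs, ht, pow_add, ← mul_assoc]
        exact Dvd.intro _ rfl
      exact (Nat.pow_dvd_pow_iff_le_right (by norm_num)).1 this
    have : Fact (Nat.Prime 2) := ⟨Nat.prime_two⟩
    obtain ⟨K, hK1, hK2⟩ := Sylow.exists_subgroup_card_pow_prime_le 2 (n := s) (m := N - k)
      (G := P) (by rw [hN]; exact pow_dvd_pow _ (by omega)) (MulAction.stabilizer P i) hs (by omega)
    refine ⟨K, hK2, ?_⟩
    have h2 := K.card_mul_index
    rw [hK1, hN] at h2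
    have h3 : 2 ^ (N - k) * K.index = 2 ^ (N - k) * 2 ^ k := by
      rw [h2, ← pow_add]; congr 1; omega
    exact (Nat.eq_of_mul_eq_mul_left (by positivity) h3).symm
  let R := MulAction.orbitRel.Quotient P I
  have : Fintype R := Fintype.ofFinite _
  have key := SI_sum (m := 2 ^ k) (Finset.univ : Finset R)
    (fun r (g : P) => ∑ j, if j ∈ MulAction.orbit P (Quotient.out r : I) then
      (if g • j = j then c g j else 0) else 0)
    (fun r _ => by
      obtain ⟨K, h1, h2⟩ := hK (Quotient.out r)
      exact SI_orbit c c1 cm _ K h1 h2)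
  convert key using 1
  ext g
  rw [Finset.sum_apply, Finset.sum_comm]
  refine Finset.sum_congr rfl fun j _ => ?_
  have : ∀ r : R, (j ∈ MulAction.orbit P (Quotient.out r : I)) ↔ r = (Quotient.mk _ j : R) := by
    intro r
    rw [← MulAction.orbitRel_apply]
    constructor
    · intro h
      rw [← Quotient.out_eq r]
      exact (Quotient.sound h).symm
    · intro h
      rw [h]
      exact (MulAction.orbitRel P I).symm (Quotient.mk_out (s := MulAction.orbitRel P I) j)
  refine Eq.symm (Eq.trans (Finset.sum_congr rfl fun r _ => if_congr (this r) rfl rfl) ?_)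
  rw [Finset.sum_eq_single (Quotient.mk _ j : R)]
  · rw [if_pos rfl]
  · intro b _ hb
    rw [if_neg hb]
  · intro h
    exact absurd (Finset.mem_univ _) h

theorem monoLemma {G V : Type} [Group G] [Fintype G] [AddCommGroup V] [Module ℂ V]
    [FiniteDimensional ℂ V] (ρ : Representation ℂ G V) [IsIrreducible ρ] (B : Subgroup G)
    (v : V) (hv : v ≠ 0) (hB : ∀ b ∈ B, ∃ t : ℂ, ρ b v = t • v) :
    finrank ℂ V ≤ B.index ∧ (finrank ℂ V = B.index →
      ∃ c : G → (G ⧸ B) → ℂ, (∀ j, c 1 j = 1) ∧ (∀ g h j, c (g * h) j = c g (h • j) * c h j) ∧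
        ∀ g, ρ.character g = ∑ j, if g • j = j then c g j else 0) := by
  let w : G ⧸ B → V := fun i => ρ (Quotient.out i) v
  have hinj : ∀ g, ∀ x, ρ g x = 0 → x = 0 := by
    intro g x hx
    have : ρ g⁻¹ (ρ g x) = x := by
      rw [← Module.End.mul_apply, ← map_mul]; simp
    rw [← this, hx, map_zero]
  have hw0 : ∀ i, w i ≠ 0 := fun i h => hv (hinj _ _ h)
  have hc : ∀ g i, ∃ t : ℂ, ρ g (w i) = t • w (g • i) := by
    intro g i
    have hm : (Quotient.out (g • i))⁻¹ * (g * Quotient.out i) ∈ B := by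
      rw [← QuotientGroup.eq]
      have h1 : ((Quotient.out (g • i) : G) : G ⧸ B) = g • i := Quotient.out_eq' _
      have h2 : ((g * Quotient.out i : G) : G ⧸ B) = g • ((Quotient.out i : G) : G ⧸ B) := rfl
      rw [h1, h2]
      congr 1
      exact (Quotient.out_eq' _).symm
    obtain ⟨t, ht⟩ := hB _ hm
    refine ⟨t, ?_⟩
    simp only [w]
    rw [← map_smul, ← ht, ← Module.End.mul_apply, ← Module.End.mul_apply, ← map_mul, ← map_mul]
    congr 2; group
  choose c hc using hc
  have htop : Submodule.span ℂ (Set.range w) = ⊤ := by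
    refine irr_top ρ _ ?_ ?_
    · intro h
      have : w (1 : G) ∈ Submodule.span ℂ (Set.range w) := Submodule.subset_span ⟨_, rfl⟩
      rw [h] at this
      exact hw0 _ ((Submodule.mem_bot _).1 this)
    · intro g x hx
      induction hx using Submodule.span_induction with
      | mem x hx =>
        obtain ⟨i, rfl⟩ := hx
        rw [hc]
        exact Submodule.smul_mem _ _ (Submodule.subset_span ⟨_, rfl⟩)
      | zero => simp
      | add x y _ _ hx hy => rw [map_add]; exact Submodule.add_mem _ hx hy
      | smul t x _ hx => rw [map_smul]; exact Submodule.smul_mem _ _ hx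
  have : Fintype (G ⧸ B) := Fintype.ofFinite _
  have hidx : B.index = Fintype.card (G ⧸ B) := by
    rw [Subgroup.index, Nat.card_eq_fintype_card]
  refine ⟨?_, ?_⟩
  · have := finrank_range_le_card (R := ℂ) w
    rw [Set.finrank, htop, finrank_top] at this
    rw [hidx]; exact this
  · intro heq
    have hli : LinearIndependent ℂ w := by
      refine linearIndependent_of_top_le_span_of_card_eq_finrank htop.ge ?_
      rw [heq, hidx]
    let b := Basis.mk hli htop.ge
    refine ⟨c, ?_, ?_, ?_⟩
    · intro j
      have := hc 1 j
      rw [map_one, one_smul, Module.End.one_apply] at this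
      have h2 : (c 1 j - 1) • w j = 0 := by rw [sub_smul, ← this]; simp
      rcases smul_eq_zero.1 h2 with h | h
      · linear_combination h
      · exact absurd h (hw0 j)
    · intro g h j
      have h1 := hc (g * h) j
      rw [map_mul, Module.End.mul_apply, hc h j, map_smul, hc, smul_smul, mul_smul g h j] at h1
      have h2 : (c h j * c g (h • j) - c (g * h) j) • w (g • h • j) = 0 := by
        rw [sub_smul, h1]; simp
      rcases smul_eq_zero.1 h2 with h | h
      · linear_combination -h
      · exact absurd h (hw0 _)
    · intro g
      rw [Representation.character, LinearMap.trace_eq_matrix_trace ℂ b, Matrix.trace]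
      have : ‹Fintype (G ⧸ B)› = _ := Subsingleton.elim _ (QuotientGroup.fintype B)
      subst this
      refine Finset.sum_congr rfl fun j _ => ?_
      rw [Matrix.diag_apply, LinearMap.toMatrix_apply, Basis.mk_apply, hc, ← Basis.mk_apply hli htop.ge,
        map_smul]
      change c g j * (b.repr (b (g • j))) j = _
      rw [Basis.repr_self, Finsupp.single_apply]
      simp


theorem exists_common {ι V : Type} [AddCommGroup V] [Module ℂ V] [FiniteDimensional ℂ V]
    (f : ι → V →ₗ[ℂ] V) (hc : ∀ i j v, f i (f j v) = f j (f i v)) (n : ℕ) :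
    ∀ W : Submodule ℂ V, finrank ℂ W = n → W ≠ ⊥ → (∀ i, ∀ w ∈ W, f i w ∈ W) →
      ∃ v ∈ W, v ≠ 0 ∧ ∀ i, ∃ t : ℂ, f i v = t • v := by
  induction n using Nat.strong_induction_on with
  | _ n ih =>
    intro W hn hW hinv
    by_cases h : ∀ i, ∃ t : ℂ, ∀ w ∈ W, f i w = t • w
    · obtain ⟨v, hv, hv0⟩ := (Submodule.ne_bot_iff _).1 hW
      exact ⟨v, hv, hv0, fun i => (h i).imp fun t ht => ht v hv⟩
    · push Not at h
      obtain ⟨i, hi⟩ := h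
      have : Nontrivial W := Submodule.nontrivial_iff_ne_bot.2 hW
      obtain ⟨μ, hμ⟩ := Module.End.exists_eigenvalue ((f i).restrict (hinv i))
      obtain ⟨u, hu⟩ := hμ.exists_hasEigenvector
      let E : Submodule ℂ V := W ⊓ LinearMap.ker (f i - μ • LinearMap.id)
      have hE : ∀ w, w ∈ E ↔ w ∈ W ∧ f i w = μ • w := by
        intro w
        simp [E, sub_eq_zero]
      have huE : (u : V) ∈ E := by
        rw [hE]
        exact ⟨u.2, congrArg Subtype.val hu.apply_eq_smul⟩
      have hlt : E < W := by
        refine lt_of_le_of_ne inf_le_left fun heq => ?_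
        obtain ⟨w, hw, hw2⟩ := hi μ
        rw [← heq, hE] at hw
        exact hw2 hw.2
      obtain ⟨v, hv, h0, h2⟩ := ih _ (hn ▸ Submodule.finrank_lt_finrank_of_lt hlt) E rfl
        (fun hb => hu.2 (Subtype.ext (by rw [hb] at huE; exact huE)))
        (fun j w hw => by
          rw [hE] at hw ⊢
          exact ⟨hinv j w hw.1, by rw [hc, hw.2, map_smul]⟩)
      exact ⟨v, hlt.le hv, h0, h2⟩

theorem exists_eigen {P V : Type} [Group P] [AddCommGroup V] [Module ℂ V] [FiniteDimensional ℂ V]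
    (ρ : Representation ℂ P V) (C : Subgroup P) (hC : ∀ a ∈ C, ∀ b ∈ C, a * b = b * a)
    (W : Submodule ℂ V) (hW : W ≠ ⊥) (hinv : ∀ c ∈ C, ∀ w ∈ W, ρ c w ∈ W) :
    ∃ v ∈ W, v ≠ 0 ∧ ∀ c ∈ C, ∃ t : ℂ, ρ c v = t • v := by
  obtain ⟨v, hv, h0, h⟩ := exists_common (fun c : C => ρ c) (fun a b v => by
    rw [← Module.End.mul_apply, ← Module.End.mul_apply, ← map_mul, ← map_mul, hC _ a.2 _ b.2])
    _ W rfl hW (fun i => hinv i i.2)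
  exact ⟨v, hv, h0, fun c hc => h ⟨c, hc⟩⟩

theorem irr_nontrivial {G V : Type} [Group G] [AddCommGroup V] [Module ℂ V]
    (ρ : Representation ℂ G V) [IsIrreducible ρ] : Nontrivial V := by
  by_contra hn
  rw [not_nontrivial_iff_subsingleton] at hn
  have : (⊥ : Subrepresentation ρ) ≠ ⊤ := bot_ne_top
  exact this (Subrepresentation.toSubmodule_injective (Subsingleton.elim _ _))

theorem lin_of_eigen {R V : Type} [Group R] [AddCommGroup V] [Module ℂ V]
    (ρ : Representation ℂ R V) (v : V) (hv : v ≠ 0) (h : ∀ r, ∃ t : ℂ, ρ r v = t • v) :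
    ∃ θ : R →* ℂ, ∀ r, ρ r v = θ r • v := by
  choose t ht using h
  have hinj : ∀ a b : ℂ, a • v = b • v → a = b := fun a b h => smul_left_injective ℂ hv h
  refine ⟨⟨⟨t, hinj _ _ ?_⟩, fun a b => hinj _ _ ?_⟩, ht⟩
  · rw [← ht]; simp
  · rw [← ht, map_mul, Module.End.mul_apply, ht b, map_smul, ht a, smul_smul, mul_comm]

theorem lin_of_dim_one {R V : Type} [Group R] [AddCommGroup V] [Module ℂ V]
    [FiniteDimensional ℂ V]
    (ρ : Representation ℂ R V) (h : finrank ℂ V = 1) :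
    ∃ θ : R →* ℂ, ρ.character = θ := by
  obtain ⟨v, hv, h1⟩ := finrank_eq_one_iff'.1 h
  obtain ⟨θ, hθ⟩ := lin_of_eigen ρ v hv (fun r => (h1 (ρ r v)).imp fun _ h => h.symm)
  refine ⟨θ, ?_⟩
  ext r
  have : ρ r = θ r • LinearMap.id := by
    ext w
    obtain ⟨c, rfl⟩ := h1 w
    rw [map_smul, hθ, LinearMap.smul_apply, LinearMap.id_apply, smul_comm]
  simp [Representation.character, this, h]

theorem inducedChar_normal {P : Type} [Group P] [Fintype P] (K : Subgroup P) [hK : K.Normal]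
    (f : P → ℂ) (hf : ∀ x g, f (x * g * x⁻¹) = f g) (g : P) :
    inducedChar K (fun k => f k) g = if g ∈ K then (K.index : ℂ) * f g else 0 := by
  simp only [inducedChar]
  have : ∀ x, x * g * x⁻¹ ∈ K ↔ g ∈ K := fun x =>
    ⟨fun h => by simpa [mul_assoc] using hK.conj_mem _ h x⁻¹, fun h => hK.conj_mem _ h x⟩
  simp only [this, hf]
  split_ifs with h
  · have h1 := K.card_mul_index
    rw [Nat.card_eq_fintype_card, Nat.card_eq_fintype_card] at h1
    have h0 : (Fintype.card K : ℂ) ≠ 0 := by exact_mod_cast Fintype.card_ne_zero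
    simp only [Finset.sum_const, Finset.card_univ, ← h1, nsmul_eq_mul]
    push_cast
    field_simp
  · simp

theorem SI_pair {P : Type} [Group P] [Fintype P] (a b : P →* ℂ) (ha : ∀ g, a g ^ 2 = 1)
    (hb : ∀ g, b g ^ 2 = 1) (s : P) (has : a s = 1) (hbs : b s = -1) :
    SI 2 ((a : P → ℂ) + (b : P → ℂ)) := by
  let K : Subgroup P :=
    { carrier := {g | a g = b g}
      mul_mem' := fun {x y} hx hy => by
        simp only [Set.mem_ofPred_eq] at *
        rw [map_mul, map_mul, hx, hy]
      one_mem' := by simp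
      inv_mem' := fun {x} hx => by
        simp only [Set.mem_ofPred_eq] at *
        have h1 : a x⁻¹ * a x = 1 := by rw [← map_mul]; simp
        have h2 : b x⁻¹ * b x = 1 := by rw [← map_mul]; simp
        have h3 : b x ≠ 0 := right_ne_zero_of_mul_eq_one h2
        rw [hx, ← h2] at h1
        exact mul_right_cancel₀ h3 h1 }
  have mK : ∀ g, g ∈ K ↔ a g = b g := fun g => Iff.rfl
  have hpm : ∀ g, a g = b g ∨ a g = - b g := by
    intro g
    have : a g ^ 2 = b g ^ 2 := by rw [ha, hb]
    exact sq_eq_sq_iff_eq_or_eq_neg.1 this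
  have hne : ∀ g, b g ≠ 0 := fun g h => by have := hb g; simp [h] at this
  have hidx : K.index = 2 := by
    rw [Subgroup.index_eq_two_iff]
    refine ⟨s, fun g => ?_⟩
    rw [mK, mK, map_mul, map_mul, has, hbs]
    rcases hpm g with h | h
    · right
      refine ⟨h, fun h2 => hne g ?_⟩
      rw [h] at h2
      linear_combination h2 / 2
    · left
      refine ⟨by rw [h]; ring, fun h2 => hne g ?_⟩
      rw [h] at h2
      linear_combination -h2 / 2
  have hn : K.Normal := Subgroup.normal_of_index_eq_two hidx
  have key := SI_lin (m := 2) K hidx.symm (a.comp K.subtype)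
  convert key using 1
  ext g
  have h := inducedChar_normal K a (fun x g => by
    rw [map_mul, map_mul, mul_right_comm, ← map_mul]; simp) g
  have h2 : inducedChar K (a.comp K.subtype) g = inducedChar K (fun k => a k) g := rfl
  rw [h2, h, hidx, Pi.add_apply]
  split_ifs with hg
  · rw [mK] at hg
    rw [← hg]; push_cast; ring
  · rcases hpm g with h | h
    · exact absurd h hg
    · rw [h]; ring

/-- sum of a list of linear characters -/
noncomputable def lsum {P : Type} [Group P] (A : List (P →* ℂ)) : P → ℂ :=
  fun g => (A.map (fun a : P →* ℂ => a g)).sum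

theorem lsum_nil {P : Type} [Group P] : lsum ([] : List (P →* ℂ)) = 0 := by
  ext; simp [lsum]

theorem lsum_cons {P : Type} [Group P] (a : P →* ℂ) (A : List (P →* ℂ)) :
    lsum (a :: A) = (a : P → ℂ) + lsum A := by
  ext; simp [lsum]

theorem lsum_append {P : Type} [Group P] (A B : List (P →* ℂ)) :
    lsum (A ++ B) = lsum A + lsum B := by
  ext; simp [lsum]

theorem lemmaQ3 {P V : Type} [Group P] [Fintype P] (hP : IsPGroup 2 P) [AddCommGroup V] [Module ℂ V]
    [FiniteDimensional ℂ V]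
    (ρ : Representation ℂ P V) (C : Subgroup P) (hC : ∀ a ∈ C, ∀ b ∈ C, a * b = b * a)
    (hidx : C.index = 2) (s : P) (hs : s ∉ C) (hlin : ∀ (θ : P →* ℂ) g, θ g ^ 2 = 1)
    (hχ : ρ.character s = 0) : SI 2 ρ.character := by
  have hn : C.Normal := Subgroup.normal_of_index_eq_two hidx
  have key : ∃ f1 : P → ℂ, SI 2 f1 ∧ f1 s = 0 ∧ ∃ A B : List (P →* ℂ), (∀ a ∈ A, a s = 1) ∧
      (∀ b ∈ B, b s = -1) ∧ ρ.character = f1 + lsum A +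
        lsum B := by
    refine char_induction (fun f => ∃ f1 : P → ℂ, SI 2 f1 ∧ f1 s = 0 ∧ ∃ A B : List (P →* ℂ), (∀ a ∈ A, a s = 1) ∧
      (∀ b ∈ B, b s = -1) ∧ f = f1 + lsum A +
        lsum B) ?_ ?_ ?_ ρ
    · exact ⟨0, SI_zero 2, rfl, [], [], by simp, by simp, by simp [lsum_nil]⟩
    · rintro f g ⟨f1, h1, h2, A, B, hA, hB, rfl⟩ ⟨f1', h1', h2', A', B', hA', hB', rfl⟩
      refine ⟨f1 + f1', SI_add h1 h1', by simp [h2, h2'], A ++ A', B ++ B', ?_, ?_, ?_⟩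
      · intro a ha
        rcases List.mem_append.1 ha with h | h
        exacts [hA a h, hA' a h]
      · intro a ha
        rcases List.mem_append.1 ha with h | h
        exacts [hB a h, hB' a h]
      · simp only [lsum_append]
        abel
    · intro V _ _ _ σ _
      have := irr_nontrivial σ
      obtain ⟨v, -, hv0, hv⟩ := exists_eigen σ C hC ⊤ (by simp) (by simp)
      obtain ⟨hle, heq⟩ := monoLemma σ C v hv0 hv
      have hpos : 0 < finrank ℂ V := finrank_pos
      rw [hidx] at hle heq
      rcases (show finrank ℂ V = 1 ∨ finrank ℂ V = 2 by omega) with h | h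
      · obtain ⟨θ, hθ⟩ := lin_of_dim_one σ h
        have h2 := hlin θ s
        rcases (sq_eq_sq_iff_eq_or_eq_neg.1 (h2.trans (one_pow 2).symm)) with h3 | h3
        · exact ⟨0, SI_zero 2, rfl, [θ], [], by simpa using h3, by simp, by simp [hθ, lsum_nil, lsum_cons]⟩
        · exact ⟨0, SI_zero 2, rfl, [], [θ], by simp, by simpa using h3, by simp [hθ, lsum_nil, lsum_cons]⟩
      · obtain ⟨c, c1, cm, hch⟩ := heq h
        refine ⟨σ.character, ?_, ?_, [], [], by simp, by simp, by simp [lsum_nil]⟩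
        · have := lemmaM hP c c1 cm 1 (fun i => by
            rw [MulAction.index_stabilizer_of_transitive, ← Subgroup.index, hidx]; norm_num)
          rw [pow_one] at this
          have h6 : σ.character = fun g => ∑ j, if g • j = j then c g j else 0 := funext hch
          rw [h6]
          convert this
        · rw [hch]
          refine Finset.sum_eq_zero fun j _ => ?_
          rw [if_neg]
          intro hj
          obtain ⟨g, rfl⟩ := QuotientGroup.mk_surjective j
          have hj' : ((s * g : P) : P ⧸ C) = g := hj
          rw [eq_comm, QuotientGroup.eq] at hj'
          have := hn.conj_mem _ hj' g
          simp [mul_assoc] at this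
          exact hs this
  obtain ⟨f1, h1, h2, A, B, hA, hB, h⟩ := key
  have hcount : ∀ (A : List (P →* ℂ)) (t : ℂ), (∀ a ∈ A, a s = t) →
      lsum A s = A.length * t := by
    intro A t
    induction A with
    | nil => simp [lsum_nil]
    | cons a A ih =>
      intro hA
      simp only [lsum_cons, Pi.add_apply, List.length_cons]
      rw [ih fun b hb => hA b (by simp [hb]), hA a (by simp)]
      push_cast; ring
  have hlen : A.length = B.length := by
    have := congrFun h s
    rw [hχ, Pi.add_apply, Pi.add_apply, h2, hcount A 1 hA, hcount B (-1) hB] at this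
    have h5 : (A.length : ℂ) = B.length := by linear_combination -this
    exact_mod_cast h5
  rw [h, add_assoc]
  refine SI_add h1 ?_
  clear h
  induction A generalizing B with
  | nil =>
    have : B = [] := by
      cases B with
      | nil => rfl
      | cons => simp at hlen
    subst this
    simpa [lsum_nil] using SI_zero 2
  | cons a A ih =>
    cases B with
    | nil => simp at hlen
    | cons b B =>
      have h3 := SI_add (SI_pair a b (hlin a) (hlin b) s (hA a (by simp)) (hB b (by simp)))
        (ih B (fun c hc => hA c (by simp [hc])) (fun c hc => hB c (by simp [hc])) (by simpa using hlen))
      convert h3 using 1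
      simp only [lsum_cons]
      abel


theorem inducedChar_conj {P : Type} [Group P] [Fintype P] (R : Subgroup P) (f : R → ℂ) (y g : P) :
    inducedChar R f (y * g * y⁻¹) = inducedChar R f g := by
  simp only [inducedChar]
  congr 1
  rw [← Equiv.sum_comp (Equiv.mulRight y) (fun x => if h : x * g * x⁻¹ ∈ R then
    f ⟨x * g * x⁻¹, h⟩ else 0)]
  refine Finset.sum_congr rfl fun x _ => ?_
  have e : x * (y * g * y⁻¹) * x⁻¹ = (Equiv.mulRight y) x * g * ((Equiv.mulRight y) x)⁻¹ := by
    simp [mul_assoc]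
  simp only [e]

theorem inducedChar_frob {P : Type} [Group P] [Fintype P] (R : Subgroup P) (f : R → ℂ)
    (l : P →* ℂ) :
    (Nat.card P : ℂ)⁻¹ * ∑ g, inducedChar R f g * l g⁻¹ =
      (Nat.card R : ℂ)⁻¹ * ∑ r : R, f r * l (r : P)⁻¹ := by
  simp only [inducedChar]
  have e1 : ∀ g, (Fintype.card R : ℂ)⁻¹ * (∑ x : P, if h : x * g * x⁻¹ ∈ R then
      f ⟨x * g * x⁻¹, h⟩ else 0) * l g⁻¹ =
      (Fintype.card R : ℂ)⁻¹ * ∑ x : P, if h : x * g * x⁻¹ ∈ R then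
      f ⟨x * g * x⁻¹, h⟩ * l (x * g * x⁻¹)⁻¹ else 0 := by
    intro g
    rw [mul_assoc, Finset.sum_mul]
    congr 1
    refine Finset.sum_congr rfl fun x _ => ?_
    have : l (x * g * x⁻¹)⁻¹ = l g⁻¹ := by
      simp only [mul_inv_rev, inv_inv, map_mul]
      rw [mul_left_comm, ← map_mul l x x⁻¹]; simp
    rw [this]
    split_ifs
    · rfl
    · rw [zero_mul]
  rw [Finset.sum_congr rfl fun g _ => e1 g, ← Finset.mul_sum, Finset.sum_comm]
  have e2 : ∀ x : P, (∑ g : P, if h : x * g * x⁻¹ ∈ R then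
      f ⟨x * g * x⁻¹, h⟩ * l (x * g * x⁻¹)⁻¹ else 0) = ∑ r : R, f r * l (r : P)⁻¹ := by
    intro x
    refine (Equiv.sum_comp (MulAut.conj x).toEquiv (fun g => if h : g ∈ R then
      f ⟨g, h⟩ * l g⁻¹ else 0)).trans ?_
    rw [Finset.sum_dite]
    simp only [Finset.sum_const_zero, add_zero]
    refine Finset.sum_bij (fun a _ => ⟨a.1, (Finset.mem_filter.1 a.2).2⟩) (by simp) ?_ ?_ ?_
    · intro a _ b _ h
      exact Subtype.ext (congrArg (fun z : R => (z : P)) h)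
    · intro b _
      exact ⟨⟨b.1, by simp⟩, by simp, rfl⟩
    · intro a _
      rfl
  rw [Finset.sum_congr rfl fun g _ => e2 g]
  simp only [Finset.sum_const, Finset.card_univ, nsmul_eq_mul, Nat.card_eq_fintype_card]
  have h0 : (Fintype.card P : ℂ) ≠ 0 := by exact_mod_cast Fintype.card_ne_zero
  field_simp

theorem inducedChar_R {P : Type} [Group P] [Fintype P] (R Z : Subgroup P) (x z0 d : P)
    (hZc : ∀ z ∈ Z, ∀ g, z * g = g * z) (hZR : Z ≤ R) (hx : x ∈ R)
    (hR : ∀ r ∈ R, r ∈ Z ∨ ∃ z ∈ Z, r = x * z) (hz0 : z0 ∈ Z)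
    (hd : d * x * d⁻¹ = x * z0) (hdR : d ∉ R)
    (hcent : ∀ y, y * x * y⁻¹ ∈ R → y ∈ R ∨ d⁻¹ * y ∈ R)
    (ω : P → ℂ) (f : R →* ℂ) (hf : ∀ z (hz : z ∈ Z), f ⟨z, hZR hz⟩ = ω z) :
    (∀ z ∈ Z, inducedChar R f z = R.index * ω z) ∧
    (∀ z ∈ Z, inducedChar R f (x * z) = f ⟨x, hx⟩ * ω z * (1 + ω z0)) ∧
    (∀ g, (∀ y, y * g * y⁻¹ ∉ R) → inducedChar R f g = 0) := by
  have hc0 : (Fintype.card R : ℂ) ≠ 0 := by exact_mod_cast Fintype.card_ne_zero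
  have hcomm : ∀ r ∈ R, r * x = x * r := by
    intro r hr
    rcases hR r hr with h | ⟨z, hz, rfl⟩
    · exact hZc r h x
    · rw [mul_assoc, hZc z hz x]
  refine ⟨?_, ?_, ?_⟩
  · intro z hz
    simp only [inducedChar]
    have e : ∀ y : P, y * z * y⁻¹ = z := fun y => by rw [← hZc z hz y]; simp
    simp only [e]
    simp only [hZR hz, dite_true, hf z hz]
    have h1 := R.card_mul_index
    rw [Nat.card_eq_fintype_card, Nat.card_eq_fintype_card] at h1
    simp only [Finset.sum_const, Finset.card_univ, ← h1, nsmul_eq_mul]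
    push_cast
    field_simp
  · intro z hz
    simp only [inducedChar]
    have e : ∀ y : P, y * (x * z) * y⁻¹ = (y * x * y⁻¹) * z := fun y => by
      rw [mul_assoc, mul_assoc, hZc z hz y⁻¹]; simp [mul_assoc]
    have hv1 : ∀ y ∈ R, y * (x * z) * y⁻¹ = x * z := fun y hy => by
      rw [e, hcomm y hy]; simp
    have hv2 : ∀ y, d⁻¹ * y ∈ R → y * (x * z) * y⁻¹ = x * z0 * z := fun y hy => by
      rw [e, ← hd]
      have := hcomm _ hy
      congr 1
      rw [mul_inv_eq_iff_eq_mul]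
      have h2 : y * x = d * (d⁻¹ * y * x) := by group
      rw [h2, this]; group
    have hfm : ∀ a b (ha : a ∈ R) (hb : b ∈ R), f ⟨a * b, R.mul_mem ha hb⟩ = f ⟨a, ha⟩ * f ⟨b, hb⟩ :=
      fun a b ha hb => map_mul f ⟨a, ha⟩ ⟨b, hb⟩
    have hsum : ∀ y : P, (if h : y * (x * z) * y⁻¹ ∈ R then f ⟨y * (x * z) * y⁻¹, h⟩ else 0) =
        (if y ∈ R then f ⟨x, hx⟩ * ω z else 0) +
        (if d⁻¹ * y ∈ R then f ⟨x, hx⟩ * ω z0 * ω z else 0) := by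
      intro y
      by_cases h1 : y ∈ R
      · have h2 : d⁻¹ * y ∉ R := fun h => hdR (by
          have := R.mul_mem h1 (R.inv_mem h); simpa using this)
        simp only [hv1 y h1, h1, h2, if_true, if_false, add_zero]
        rw [dif_pos (R.mul_mem hx (hZR hz)), hfm x z hx (hZR hz), hf z hz]
      · by_cases h2 : d⁻¹ * y ∈ R
        · simp only [hv2 y h2, h1, h2, if_true, if_false, zero_add]
          rw [dif_pos (R.mul_mem (R.mul_mem hx (hZR hz0)) (hZR hz)),
            hfm _ z (R.mul_mem hx (hZR hz0)) (hZR hz), hfm x z0 hx (hZR hz0), hf z hz, hf z0 hz0]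
        · rw [dif_neg, if_neg h1, if_neg h2, add_zero]
          intro h
          rw [e] at h
          have h3 := R.mul_mem h (R.inv_mem (hZR hz))
          rw [mul_inv_cancel_right] at h3
          rcases hcent y h3 with h4 | h4
          exacts [h1 h4, h2 h4]
    rw [Finset.sum_congr rfl fun y _ => hsum y, Finset.sum_add_distrib]
    have hcard : (Finset.univ.filter (fun x => x ∈ R)).card = Fintype.card R := by
      rw [Fintype.card_subtype]
    have s2 : ∑ y : P, (if d⁻¹ * y ∈ R then f ⟨x, hx⟩ * ω z0 * ω z else 0) =
        ∑ y : P, (if y ∈ R then f ⟨x, hx⟩ * ω z0 * ω z else 0) :=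
      Equiv.sum_comp (Equiv.mulLeft d⁻¹) (fun y => if y ∈ R then f ⟨x, hx⟩ * ω z0 * ω z else 0)
    rw [s2, ← Finset.sum_filter, ← Finset.sum_filter, Finset.sum_const, Finset.sum_const, hcard]
    simp only [nsmul_eq_mul]
    field_simp
  · intro g hg
    simp only [inducedChar]
    rw [Finset.sum_eq_zero, mul_zero]
    intro y _
    rw [dif_neg (hg y)]

theorem lemmaR {P V : Type} [Group P] [Fintype P] [AddCommGroup V] [Module ℂ V]
    [FiniteDimensional ℂ V] [Nontrivial V] (ρ : Representation ℂ P V) (R Z : Subgroup P) (x z0 d : P)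
    (hZc : ∀ z ∈ Z, ∀ g, z * g = g * z) (hZR : Z ≤ R) (hx : x ∈ R)
    (hR : ∀ r ∈ R, r ∈ Z ∨ ∃ z ∈ Z, r = x * z) (hz0 : z0 ∈ Z) (hz02 : z0 * z0 = 1)
    (hd : d * x * d⁻¹ = x * z0) (hdR : d ∉ R)
    (hcent : ∀ y, y * x * y⁻¹ ∈ R → y ∈ R ∨ d⁻¹ * y ∈ R)
    (ω : P → ℂ) (hω : ∀ z ∈ Z, ∀ v, ρ z v = ω z • v)
    (hvan : ∀ g, (∀ y, y * g * y⁻¹ ∉ R) → ρ.character g = 0)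
    (k : ℕ) (hdim : finrank ℂ V = k * R.index)
    (hlam : ω z0 = 1 → ∃ l1 l2 : P →* ℂ, (∀ z ∈ Z, l1 z = ω z) ∧ (∀ z ∈ Z, l2 z = ω z) ∧
      l2 x = - l1 x) : SI R.index ρ.character := by
  obtain ⟨v0, hv0⟩ := exists_ne (0 : V)
  have hωm : ω z0 = 1 ∨ ω z0 = -1 := by
    have h1 : ρ (z0 * z0) v0 = (ω z0 * ω z0) • v0 := by
      rw [map_mul, Module.End.mul_apply, hω _ hz0, hω _ hz0, smul_smul]
    rw [hz02, map_one, Module.End.one_apply] at h1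
    have h2 : ω z0 * ω z0 = 1 := smul_left_injective ℂ hv0 (by simp only [← h1, one_smul])
    exact mul_self_eq_one_iff.1 h2
  have hcomm : ∀ r ∈ R, ∀ r' ∈ R, r * r' = r' * r := by
    have hx' : ∀ r ∈ R, r * x = x * r := by
      intro r hr
      rcases hR r hr with h | ⟨z, hz, rfl⟩
      · exact hZc r h x
      · rw [mul_assoc, hZc z hz x]
    intro r hr r' hr'
    rcases hR r' hr' with h | ⟨z, hz, rfl⟩
    · exact (hZc r' h r).symm
    · rw [← mul_assoc, hx' r hr, mul_assoc, mul_assoc, hZc z hz r]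
  have chz : ∀ z ∈ Z, ρ.character z = k * R.index * ω z := by
    intro z hz
    have : ρ z = ω z • LinearMap.id := by ext v; simp [hω z hz]
    simp [Representation.character, this, hdim]; ring
  have chm : ∀ g, ∀ z ∈ Z, ρ.character (g * z) = ρ.character g * ω z := by
    intro g z hz
    have : ρ (g * z) = ω z • ρ g := by ext v; simp [hω z hz]
    simp [Representation.character, this]; ring
  have chx0 : ρ.character x * ω z0 = ρ.character x := by
    rw [← chm x z0 hz0, ← hd, Representation.char_conj]
  -- reduction for equality of class functions
  have ext_cl : ∀ F : P → ℂ, (∀ y g, F (y * g * y⁻¹) = F g) → (∀ z ∈ Z, F z = ρ.character z) →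
      (∀ z ∈ Z, F (x * z) = ρ.character (x * z)) → (∀ g, (∀ y, y * g * y⁻¹ ∉ R) → F g = 0) →
      ρ.character = F := by
    intro F h1 h2 h3 h4
    ext g
    by_cases h : ∀ y, y * g * y⁻¹ ∉ R
    · rw [hvan g h, h4 g h]
    · push Not at h
      obtain ⟨y, hy⟩ := h
      rw [← h1 y g, ← Representation.char_conj ρ g y]
      rcases hR _ hy with h | ⟨z, hz, h⟩
      · rw [h2 _ h]
      · rw [h, h3 _ hz]
  rcases hωm with hω1 | hω1
  · obtain ⟨l1, l2, h1, h2, h12⟩ := hlam hω1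
    have A1 := inducedChar_R R Z x z0 d hZc hZR hx hR hz0 hd hdR hcent ω (l1.comp R.subtype)
      (fun z hz => h1 z hz)
    have A2 := inducedChar_R R Z x z0 d hZc hZR hx hR hz0 hd hdR hcent ω (l2.comp R.subtype)
      (fun z hz => h2 z hz)
    have hl0 : l1 x ≠ 0 := by
      have : l1 x * l1 x⁻¹ = 1 := by rw [← map_mul]; simp
      exact left_ne_zero_of_mul_eq_one this
    let a : ℂ := (k + ρ.character x / (2 * l1 x)) / 2
    let b : ℂ := (k - ρ.character x / (2 * l1 x)) / 2
    have hF : ρ.character = fun g => a * inducedChar R (l1.comp R.subtype) g +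
        b * inducedChar R (l2.comp R.subtype) g := by
      apply ext_cl
      · intro y g
        simp only [inducedChar_conj]
      · intro z hz
        rw [A1.1 z hz, A2.1 z hz, chz z hz]
        simp only [a, b]; ring
      · intro z hz
        rw [A1.2.1 z hz, A2.2.1 z hz, chm x z hz, hω1]
        simp only [MonoidHom.comp_apply, Subgroup.subtype_apply, h12, a, b]
        field_simp
        ring
      · intro g hg
        rw [A1.2.2 g hg, A2.2.2 g hg]; simp
    -- orthogonality on R
    have orth : ∀ l l' : P →* ℂ, (∀ z ∈ Z, l z = ω z) → (∀ z ∈ Z, l' z = ω z) →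
        (l = l' → (Nat.card R : ℂ)⁻¹ * ∑ r : R, l r * l' (r : P)⁻¹ = 1) ∧
        (l x = - l' x → (Nat.card R : ℂ)⁻¹ * ∑ r : R, l r * l' (r : P)⁻¹ = 0) := by
      intro l l' hl hl'
      constructor
      · rintro rfl
        have : ∀ r : R, l r * l (r : P)⁻¹ = 1 := fun r => by rw [← map_mul]; simp
        rw [Finset.sum_congr rfl fun r _ => this r]
        simp
      · intro hneg
        have hinv : ∀ g : P, l' g⁻¹ * l' g = 1 := fun g => by rw [← map_mul]; simp
        have e : ∑ r : R, l r * l' (r : P)⁻¹ = ∑ r : R, -(l r * l' (r : P)⁻¹) := by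
          rw [← Equiv.sum_comp (Equiv.mulLeft (⟨x, hx⟩ : R))]
          refine Finset.sum_congr rfl fun r _ => ?_
          simp only [Equiv.coe_mulLeft, Subgroup.coe_mul, mul_inv_rev, map_mul, hneg]
          linear_combination (-(l r * l' (r:P)⁻¹)) * hinv x
        rw [Finset.sum_neg_distrib] at e
        have : ∑ r : R, l r * l' (r : P)⁻¹ = 0 := by linear_combination e / 2
        rw [this, mul_zero]
    have frob : ∀ l : P →* ℂ, ∃ n : ℕ, (n : ℂ) =
        a * ((Nat.card R : ℂ)⁻¹ * ∑ r : R, l1 r * l (r : P)⁻¹) +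
        b * ((Nat.card R : ℂ)⁻¹ * ∑ r : R, l2 r * l (r : P)⁻¹) := by
      intro l
      have key := Representation.card_inv_mul_sum_char_mul_char_eq_finrank ρ (linRep l)
      have key2 := Representation.card_inv_mul_sum_char_mul_char_eq_finrank (linRep l) ρ
      rw [linRep_char] at key key2
      have f1 := inducedChar_frob R (l1.comp R.subtype) l
      have f2 := inducedChar_frob R (l2.comp R.subtype) l
      have e1 : ∑ r : R, (l1.comp R.subtype) r * l (r : P)⁻¹ = ∑ r : R, l1 r * l (r : P)⁻¹ := rfl
      have e2 : ∑ r : R, (l2.comp R.subtype) r * l (r : P)⁻¹ = ∑ r : R, l2 r * l (r : P)⁻¹ := rfl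
      rw [e1] at f1
      rw [e2] at f2
      rw [← f1, ← f2]
      have e3 : a * ((Nat.card P : ℂ)⁻¹ * ∑ g, inducedChar R (l1.comp R.subtype) g * l g⁻¹) +
        b * ((Nat.card P : ℂ)⁻¹ * ∑ g, inducedChar R (l2.comp R.subtype) g * l g⁻¹) =
        (Nat.card P : ℂ)⁻¹ * ∑ g, ρ.character g * l g⁻¹ := by
        rw [hF]
        simp only [Finset.mul_sum]
        rw [← Finset.sum_add_distrib]
        refine Finset.sum_congr rfl fun g _ => ?_
        ring
      rw [e3]
      first
        | exact ⟨_, key.symm⟩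
        | exact ⟨_, key2.symm⟩
    obtain ⟨na, hna⟩ := frob l1
    obtain ⟨nb, hnb⟩ := frob l2
    rw [(orth l1 l1 h1 h1).1 rfl, (orth l2 l1 h2 h1).2 h12] at hna
    rw [(orth l2 l2 h2 h2).1 rfl, (orth l1 l2 h1 h2).2 (by rw [h12]; ring)] at hnb
    have hfin := SI_add (SI_nsmul na (SI_lin R rfl (l1.comp R.subtype)))
      (SI_nsmul nb (SI_lin R rfl (l2.comp R.subtype)))
    convert hfin using 1
    rw [hF]
    ext g
    rw [Pi.add_apply, Pi.smul_apply, Pi.smul_apply, nsmul_eq_mul, nsmul_eq_mul, hna, hnb]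
    ring
  · have hx0 : ρ.character x = 0 := by
      rw [hω1] at chx0
      linear_combination -chx0 / 2
    obtain ⟨v, -, hv, h⟩ := exists_eigen ρ R hcomm ⊤ (by simp) (by simp)
    obtain ⟨θ, hθ⟩ := lin_of_eigen (ρ.comp R.subtype) v hv (fun r => h r r.2)
    have hθω : ∀ z (hz : z ∈ Z), θ ⟨z, hZR hz⟩ = ω z := by
      intro z hz
      have h1 := hθ ⟨z, hZR hz⟩
      have h2 : (ρ.comp R.subtype) ⟨z, hZR hz⟩ v = ω z • v := hω z hz v
      rw [h2] at h1
      exact (smul_left_injective ℂ hv h1).symm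
    have A := inducedChar_R R Z x z0 d hZc hZR hx hR hz0 hd hdR hcent ω θ hθω
    have hF : ρ.character = k • inducedChar R θ := by
      apply ext_cl
      · intro y g
        simp only [Pi.smul_apply, inducedChar_conj]
      · intro z hz
        rw [Pi.smul_apply, A.1 z hz, chz z hz, nsmul_eq_mul]; ring
      · intro z hz
        rw [Pi.smul_apply, A.2.1 z hz, chm x z hz, hω1, hx0]; simp
      · intro g hg
        rw [Pi.smul_apply, A.2.2 g hg]; simp
    rw [hF]
    exact SI_nsmul k (SI_lin R rfl θ)


/-- short name -/
abbrev G2 (F : Type) [Field F] := Matrix.GeneralLinearGroup (Fin 2) F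

section gl
variable {F : Type} [Field F]

theorem gl_ext {g h : G2 F} (h1 : g.val 0 0 = h.val 0 0) (h2 : g.val 0 1 = h.val 0 1)
    (h3 : g.val 1 0 = h.val 1 0) (h4 : g.val 1 1 = h.val 1 1) : g = h := by
  apply Units.ext
  ext i j
  fin_cases i <;> fin_cases j <;> assumption

theorem gl_mul (g h : G2 F) (i j : Fin 2) :
    (g * h).val i j = g.val i 0 * h.val 0 j + g.val i 1 * h.val 1 j := by
  rw [Units.val_mul, Matrix.mul_apply, Fin.sum_univ_two]

theorem gl_one00 : (1 : G2 F).val 0 0 = 1 := by simp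
theorem gl_one01 : (1 : G2 F).val 0 1 = 0 := by simp
theorem gl_one10 : (1 : G2 F).val 1 0 = 0 := by simp
theorem gl_one11 : (1 : G2 F).val 1 1 = 1 := by simp

/-- matrix from entries -/
noncomputable def m2 (a b c d : F) (h : a * d - b * c ≠ 0) : G2 F :=
  Matrix.GeneralLinearGroup.mkOfDetNeZero !![a, b; c, d] (by rw [Matrix.det_fin_two_of]; exact h)

variable (a b c d : F) (h : a * d - b * c ≠ 0)
theorem m2_00 : (m2 a b c d h).val 0 0 = a := rfl
theorem m2_01 : (m2 a b c d h).val 0 1 = b := rfl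
theorem m2_10 : (m2 a b c d h).val 1 0 = c := rfl
theorem m2_11 : (m2 a b c d h).val 1 1 = d := rfl

theorem gl_det (g : G2 F) : g.val 0 0 * g.val 1 1 - g.val 0 1 * g.val 1 0 ≠ 0 := by
  rw [← Matrix.det_fin_two]
  exact g.isUnit.map Matrix.detMonoidHom |>.ne_zero

/-- unipotent -/
noncomputable def uu (x : F) : G2 F := m2 1 x 0 1 (by simp)
/-- diagonal -/
noncomputable def dd (a b : Fˣ) : G2 F := m2 a 0 0 b (by simp)
/-- antidiagonal -/
noncomputable def aa (a b : Fˣ) : G2 F := m2 0 a b 0 (by simp)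
/-- involution -/
noncomputable def tau (g : G2 F) : G2 F :=
  m2 (g.val 1 1) (g.val 0 1) (g.val 1 0) (g.val 0 0) (by have := gl_det g; rwa [mul_comm])

end gl

theorem ddinv {F : Type} [Field F] (a b : Fˣ) : (dd a b)⁻¹ = dd a⁻¹ b⁻¹ := by
  rw [inv_eq_iff_mul_eq_one]
  apply gl_ext <;> simp [gl_mul, gl_one00, gl_one01, gl_one10, gl_one11, dd, m2_00, m2_01, m2_10, m2_11]

section gl2
variable {F : Type} [Field F]

theorem uu_zero : uu (0 : F) = 1 := by
  apply gl_ext <;> simp [uu, m2_00, m2_01, m2_10, m2_11]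

theorem uu_add (x y : F) : uu (x + y) = uu x * uu y := by
  apply gl_ext <;> simp [gl_mul, uu, m2_00, m2_01, m2_10, m2_11, add_comm]

theorem uu_inv (x : F) : (uu x)⁻¹ = uu (-x) := by
  rw [inv_eq_iff_mul_eq_one, ← uu_add, add_neg_cancel, uu_zero]

theorem dd_uu (a b : Fˣ) (x : F) : dd a b * uu x = uu (a * x * (b⁻¹ : Fˣ)) * dd a b := by
  apply gl_ext <;> simp [gl_mul, uu, dd, m2_00, m2_01, m2_10, m2_11]

theorem dd_mul (a b c d : Fˣ) : dd a b * dd c d = dd (a * c) (b * d) := by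
  apply gl_ext <;> simp [gl_mul, dd, m2_00, m2_01, m2_10, m2_11]

theorem aa_mul (a b c d : Fˣ) : aa a b * aa c d = dd (a * d) (b * c) := by
  apply gl_ext <;> simp [gl_mul, aa, dd, m2_00, m2_01, m2_10, m2_11]

theorem dd_aa (a b c d : Fˣ) : dd a b * aa c d = aa (a * c) (b * d) := by
  apply gl_ext <;> simp [gl_mul, aa, dd, m2_00, m2_01, m2_10, m2_11]

theorem aa_dd (a b c d : Fˣ) : aa a b * dd c d = aa (a * d) (b * c) := by
  apply gl_ext <;> simp [gl_mul, aa, dd, m2_00, m2_01, m2_10, m2_11]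

theorem dd_one : dd (1 : Fˣ) 1 = 1 := by
  apply gl_ext <;> simp [dd, m2_00, m2_01, m2_10, m2_11]

theorem tau_mul (g h : G2 F) : tau (g * h) = tau h * tau g := by
  apply gl_ext <;> simp [gl_mul, tau, m2_00, m2_01, m2_10, m2_11] <;> ring

theorem tau_uu (x : F) : tau (uu x) = uu x := by
  apply gl_ext <;> simp [tau, uu, m2_00, m2_01, m2_10, m2_11]

theorem tau_aa (a b : Fˣ) : tau (aa a b) = aa a b := by
  apply gl_ext <;> simp [tau, aa, m2_00, m2_01, m2_10, m2_11]

theorem tau_dd (a b : Fˣ) : tau (dd a b) = dd b a := by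
  apply gl_ext <;> simp [tau, dd, m2_00, m2_01, m2_10, m2_11]

theorem bruhat (g : G2 F) : (∃ x a b y, g = uu x * aa a b * uu y) ∨ ∃ x a b, g = uu x * dd a b := by
  have hdet := gl_det g
  by_cases hc : g.val 1 0 = 0
  · right
    rw [hc, mul_zero, sub_zero] at hdet
    have h0 : g.val 0 0 ≠ 0 := left_ne_zero_of_mul hdet
    have h1 : g.val 1 1 ≠ 0 := right_ne_zero_of_mul hdet
    refine ⟨g.val 0 1 / g.val 1 1, Units.mk0 _ h0, Units.mk0 _ h1, ?_⟩
    apply gl_ext <;> simp [gl_mul, uu, dd, m2_00, m2_01, m2_10, m2_11, hc, h1]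
  · left
    have hb : g.val 0 1 - g.val 0 0 * g.val 1 1 / g.val 1 0 ≠ 0 := by
      intro h
      apply hdet
      field_simp at h
      linear_combination -h
    refine ⟨g.val 0 0 / g.val 1 0, Units.mk0 _ hb, Units.mk0 _ hc, g.val 1 1 / g.val 1 0, ?_⟩
    apply gl_ext <;> simp [gl_mul, uu, aa, m2_00, m2_01, m2_10, m2_11]
    all_goals field_simp
    ring

end gl2

section reps
variable {F : Type} [Field F] [Fintype F] {V : Type} [AddCommGroup V] [Module ℂ V]
    [FiniteDimensional ℂ V] (ρ : Representation ℂ (G2 F) V)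

theorem qne : (Fintype.card F : ℂ) ≠ 0 := by exact_mod_cast Fintype.card_ne_zero

/-- projector -/
noncomputable def pr (ψ : AddChar F ℂ) : V →ₗ[ℂ] V :=
  (Fintype.card F : ℂ)⁻¹ • ∑ x, ψ (-x) • ρ (uu x)

variable (ψ : AddChar F ℂ)

theorem psi_mul_neg (x : F) : ψ x * ψ (-x) = 1 := by
  rw [← AddChar.map_add_eq_mul]; simp

theorem uu_pr (x : F) : ρ (uu x) * pr ρ ψ = ψ x • pr ρ ψ := by
  rw [pr, mul_smul_comm, smul_comm]
  congr 1
  rw [Finset.mul_sum, Finset.smul_sum]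
  rw [← Equiv.sum_comp (Equiv.addLeft x) (fun y => ψ x • ψ (-y) • ρ (uu y))]
  refine Finset.sum_congr rfl fun y _ => ?_
  simp only [Equiv.coe_addLeft]
  rw [mul_smul_comm, ← map_mul, ← uu_add, smul_smul, neg_add, AddChar.map_add_eq_mul, ← mul_assoc,
    psi_mul_neg, one_mul]

theorem pr_uu (x : F) : pr ρ ψ * ρ (uu x) = ψ x • pr ρ ψ := by
  rw [← uu_pr, pr, mul_smul_comm, smul_mul_assoc]
  congr 1
  rw [Finset.mul_sum, Finset.sum_mul]
  refine Finset.sum_congr rfl fun y _ => ?_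
  rw [mul_smul_comm, smul_mul_assoc, ← map_mul, ← map_mul, ← uu_add, ← uu_add, add_comm]

theorem pr_idem : pr ρ ψ * pr ρ ψ = pr ρ ψ := by
  have e2 : pr ρ ψ * pr ρ ψ = ((Fintype.card F : ℂ)⁻¹ • ∑ x, ψ (-x) • ρ (uu x)) * pr ρ ψ := rfl
  rw [e2, smul_mul_assoc, Finset.sum_mul]
  have : ∀ x ∈ Finset.univ, ψ (-x) • ρ (uu x) * pr ρ ψ = pr ρ ψ := by
    intro x _
    rw [smul_mul_assoc, uu_pr, smul_smul, mul_comm, psi_mul_neg, one_smul]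
  rw [Finset.sum_congr rfl this, Finset.sum_const, Finset.card_univ, ← Nat.cast_smul_eq_nsmul ℂ,
    smul_smul, inv_mul_cancel₀ qne, one_smul]

theorem mem_pr (v : V) : v ∈ LinearMap.range (pr ρ ψ) ↔ ∀ x, ρ (uu x) v = ψ x • v := by
  constructor
  · rintro ⟨w, rfl⟩ x
    exact congrArg (fun f : V →ₗ[ℂ] V => f w) (uu_pr ρ ψ x)
  · intro h
    refine ⟨v, ?_⟩
    simp only [pr, LinearMap.smul_apply, LinearMap.sum_apply, h, smul_smul]
    have h1 : ∀ x, ψ (-x) * ψ x = 1 := fun x => by rw [mul_comm, psi_mul_neg]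
    simp only [h1, one_smul, Finset.sum_const, Finset.card_univ]
    rw [← Nat.cast_smul_eq_nsmul ℂ, smul_smul, inv_mul_cancel₀ qne, one_smul]

theorem pr_trace : LinearMap.trace ℂ V (pr ρ ψ) = finrank ℂ (LinearMap.range (pr ρ ψ)) :=
  LinearMap.IsProj.trace ((LinearMap.isProj_range_iff_isIdempotentElem _).2 (pr_idem ρ ψ))

theorem char_uu (x : F) (hx : x ≠ 0) : ρ.character (uu x) = ρ.character (uu 1) := by
  have : uu x = dd (Units.mk0 x hx) 1 * uu 1 * (dd (Units.mk0 x hx) 1)⁻¹ := by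
    rw [dd_uu]; simp
  rw [this, Representation.char_conj]

theorem pr_trace2 : (Fintype.card F : ℂ) * finrank ℂ (LinearMap.range (pr ρ ψ)) =
    finrank ℂ V + (∑ x, ψ x - 1) * ρ.character (uu 1) := by
  rw [← pr_trace, pr, map_smul, map_sum, smul_eq_mul, mul_inv_cancel_left₀ qne]
  have e : ∀ x, LinearMap.trace ℂ V (ψ (-x) • ρ (uu x)) =
      ψ (-x) * ρ.character (uu 1) + if x = 0 then (finrank ℂ V - ρ.character (uu 1) : ℂ) else 0 := by
    intro x
    rw [map_smul, smul_eq_mul]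
    change ψ (-x) * ρ.character (uu x) = _
    by_cases hx : x = 0
    · subst hx
      rw [uu_zero, Representation.char_one]
      simp
    · rw [char_uu ρ x hx]; simp [hx]
  have e0 : ∑ x, ψ (-x) = ∑ x, ψ x := Equiv.sum_comp (Equiv.neg F) (fun x => ψ x)
  rw [Finset.sum_congr rfl fun x _ => e x, Finset.sum_add_distrib, ← Finset.sum_mul, e0]
  simp
  ring

theorem dim_formula (hψ : ψ ≠ 1) : finrank ℂ V = finrank ℂ (LinearMap.range (pr ρ 1)) +
    (Fintype.card F - 1) * finrank ℂ (LinearMap.range (pr ρ ψ)) := by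
  have h1 := pr_trace2 ρ (1 : AddChar F ℂ)
  have h2 := pr_trace2 ρ ψ
  rw [AddChar.sum_eq_zero_of_ne_one hψ] at h2
  simp at h1
  have hq : 1 ≤ Fintype.card F := Fintype.card_pos
  have : ((finrank ℂ V : ℕ) : ℂ) = ((finrank ℂ (LinearMap.range (pr ρ 1)) +
    (Fintype.card F - 1) * finrank ℂ (LinearMap.range (pr ρ ψ)) : ℕ) : ℂ) := by
    push_cast [hq]
    apply mul_left_cancel₀ (qne (F := F))
    linear_combination -h1 - (Fintype.card F - 1 : ℂ) * h2
  exact_mod_cast this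

theorem triv_of_zero (hψ : ψ ≠ 1) (hm : finrank ℂ (LinearMap.range (pr ρ ψ)) = 0) (x : F) :
    ρ (uu x) = 1 := by
  have h := dim_formula ρ ψ hψ
  rw [hm, mul_zero, add_zero] at h
  have htop : LinearMap.range (pr ρ 1) = ⊤ := Submodule.eq_top_of_finrank_eq h.symm
  ext v
  have := (mem_pr ρ 1 v).1 (by rw [htop]; trivial) x
  simpa using this

theorem gelf_tau (hψ : ψ ≠ 1) (g : G2 F) :
    pr ρ ψ * ρ g * pr ρ ψ = pr ρ ψ * ρ (tau g) * pr ρ ψ := by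
  have hmul : ∀ x y g, pr ρ ψ * ρ (uu x * g * uu y) * pr ρ ψ = (ψ x * ψ y) • (pr ρ ψ * ρ g * pr ρ ψ) := by
    intro x y g
    rw [map_mul, map_mul, ← mul_assoc, ← mul_assoc, pr_uu, mul_assoc, uu_pr]
    simp only [smul_mul_assoc, mul_smul_comm, smul_smul, mul_comm]
  have hz : ∀ a b : Fˣ, a ≠ b → pr ρ ψ * ρ (dd a b) * pr ρ ψ = 0 := by
    intro a b hab
    obtain ⟨t, ht⟩ : ∃ t, ψ t ≠ 1 := by
      by_contra! hcon
      exact hψ (by ext t; simp [hcon])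
    have hne : (a : F) * (b⁻¹ : Fˣ) - 1 ≠ 0 := by
      intro h
      apply hab
      have : (a : F) * (b⁻¹ : Fˣ) = 1 := sub_eq_zero.1 h
      have h3 : a * b⁻¹ = 1 := Units.ext (by simpa using this)
      exact mul_inv_eq_one.1 h3
    let s := t / ((a : F) * (b⁻¹ : Fˣ) - 1)
    have hs : (a : F) * s * (b⁻¹ : Fˣ) = s + t := by
      have : s * ((a : F) * (b⁻¹ : Fˣ) - 1) = t := div_mul_cancel₀ _ hne
      linear_combination this
    have h1 := hmul 0 s (dd a b)
    have h2 := hmul (s + t) 0 (dd a b)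
    rw [uu_zero, one_mul, dd_uu, hs] at h1
    rw [uu_zero, mul_one] at h2
    rw [h1] at h2
    have h3 : (ψ s * (ψ t - 1)) • (pr ρ ψ * ρ (dd a b) * pr ρ ψ) = 0 := by
      rw [mul_sub, sub_smul, ← AddChar.map_add_eq_mul]
      have h4 : ψ 0 = 1 := AddChar.map_zero_eq_one ψ
      rw [h4, one_mul, mul_one] at h2
      rw [← h2, mul_one, sub_self]
    rcases smul_eq_zero.1 h3 with h4 | h4
    · rcases mul_eq_zero.1 h4 with h5 | h5
      · have := psi_mul_neg ψ s
        rw [h5, zero_mul] at this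
        exact absurd this zero_ne_one
      · exact absurd (sub_eq_zero.1 h5) ht
    · exact h4
  rcases bruhat g with ⟨x, a, b, y, rfl⟩ | ⟨x, a, b, rfl⟩
  · rw [tau_mul, tau_mul, tau_uu, tau_uu, tau_aa, ← mul_assoc, hmul, hmul, mul_comm (ψ x)]
  · by_cases hab : a = b
    · subst hab
      rw [tau_mul, tau_uu, tau_dd]
      have h1 := hmul x 0 (dd a a)
      have h2 := hmul 0 x (dd a a)
      rw [uu_zero, mul_one] at h1
      rw [uu_zero, one_mul] at h2
      rw [h1, h2, mul_comm]
    · rw [tau_mul, tau_uu, tau_dd]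
      have h1 := hmul x 0 (dd a b)
      have h2 := hmul 0 x (dd b a)
      rw [uu_zero, mul_one] at h1
      rw [uu_zero, one_mul] at h2
      rw [h1, h2, hz a b hab, hz b a (Ne.symm hab)]
      simp

theorem gelf_comm (hψ : ψ ≠ 1) (g h : G2 F) :
    (pr ρ ψ * ρ g * pr ρ ψ) * (pr ρ ψ * ρ h * pr ρ ψ) =
      (pr ρ ψ * ρ h * pr ρ ψ) * (pr ρ ψ * ρ g * pr ρ ψ) := by
  have hexp : ∀ g h, (pr ρ ψ * ρ g * pr ρ ψ) * (pr ρ ψ * ρ h * pr ρ ψ) =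
      (Fintype.card F : ℂ)⁻¹ • ∑ x, ψ (-x) • (pr ρ ψ * ρ (g * uu x * h) * pr ρ ψ) := by
    intro g h
    have e1 : (pr ρ ψ * ρ g * pr ρ ψ) * (pr ρ ψ * ρ h * pr ρ ψ) =
        pr ρ ψ * ρ g * (pr ρ ψ * pr ρ ψ) * ρ h * pr ρ ψ := by simp only [mul_assoc]
    have e2 : pr ρ ψ = (Fintype.card F : ℂ)⁻¹ • ∑ x, ψ (-x) • ρ (uu x) := rfl
    rw [e1, pr_idem]
    have e3 : pr ρ ψ * ρ g * pr ρ ψ * ρ h * pr ρ ψ =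
      pr ρ ψ * ρ g * ((Fintype.card F : ℂ)⁻¹ • ∑ x, ψ (-x) • ρ (uu x)) * ρ h * pr ρ ψ := by
      rw [← e2]
    rw [e3]
    simp only [mul_smul_comm, smul_mul_assoc, Finset.mul_sum, Finset.sum_mul, map_mul, mul_assoc]
  rw [hexp, gelf_tau ρ ψ hψ g, gelf_tau ρ ψ hψ h, hexp]
  congr 1
  refine Finset.sum_congr rfl fun x _ => ?_
  congr 1
  rw [gelf_tau ρ ψ hψ, tau_mul, tau_mul, tau_uu, mul_assoc (tau h)]

theorem gelfand [IsIrreducible ρ] (hψ : ψ ≠ 1) : finrank ℂ (LinearMap.range (pr ρ ψ)) ≤ 1 := by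
  by_cases hb : LinearMap.range (pr ρ ψ) = ⊥
  · rw [hb]; simp
  obtain ⟨v, hv, hv0, hA⟩ := exists_common (fun g : G2 F => pr ρ ψ * ρ g * pr ρ ψ)
    (fun g h v => congrArg (fun f : V →ₗ[ℂ] V => f v) (gelf_comm ρ ψ hψ g h)) _
    (LinearMap.range (pr ρ ψ)) rfl hb (fun g w _ => ⟨_, rfl⟩)
  have hev : pr ρ ψ v = v := by
    obtain ⟨w, rfl⟩ := hv
    exact congrArg (fun f : V →ₗ[ℂ] V => f w) (pr_idem ρ ψ)
  have htop : Submodule.span ℂ (Set.range fun g : G2 F => ρ g v) = ⊤ := by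
    refine irr_top ρ _ ?_ ?_
    · intro h
      have : ρ 1 v ∈ Submodule.span ℂ (Set.range fun g : G2 F => ρ g v) :=
        Submodule.subset_span ⟨_, rfl⟩
      rw [h] at this
      exact hv0 (by simpa using this)
    · intro g w hw
      induction hw using Submodule.span_induction with
      | mem x hx =>
        obtain ⟨i, rfl⟩ := hx
        exact Submodule.subset_span ⟨g * i, by simp⟩
      | zero => simp
      | add x y _ _ hx hy => rw [map_add]; exact Submodule.add_mem _ hx hy
      | smul t x _ hx => rw [map_smul]; exact Submodule.smul_mem _ _ hx
  have hle : LinearMap.range (pr ρ ψ) ≤ Submodule.span ℂ {v} := by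
    rw [← Submodule.map_top, ← htop, Submodule.map_span, Submodule.span_le]
    rintro _ ⟨_, ⟨g, rfl⟩, rfl⟩
    obtain ⟨t, ht⟩ := hA g
    have : pr ρ ψ (ρ g v) = t • v := by
      rw [← ht]
      change _ = pr ρ ψ (ρ g (pr ρ ψ v))
      rw [hev]
    simp only [this]
    exact Submodule.smul_mem _ _ (Submodule.mem_span_singleton_self v)
  calc _ ≤ finrank ℂ (Submodule.span ℂ {v}) := Submodule.finrank_mono hle
    _ ≤ 1 := finrank_span_singleton hv0 |>.le

end reps


section borel
variable {F : Type} [Field F]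

/-- Borel subgroup -/
def BB (F : Type) [Field F] : Subgroup (G2 F) where
  carrier := {g | g.val 1 0 = 0}
  one_mem' := gl_one10
  mul_mem' := by
    intro a b ha hb
    simp only [Set.mem_ofPred_eq] at *
    rw [gl_mul, ha, hb]; simp
  inv_mem' := by
    intro g hg
    simp only [Set.mem_ofPred_eq] at *
    have h := gl_mul g⁻¹ g 1 0
    rw [inv_mul_cancel, gl_one10, hg, mul_zero, add_zero] at h
    have hd := gl_det g
    rw [hg, mul_zero, sub_zero] at hd
    exact (mul_eq_zero.1 h.symm).resolve_right (left_ne_zero_of_mul hd)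

theorem mem_BB (g : G2 F) : g ∈ BB F ↔ ∃ x a b, g = uu x * dd a b := by
  constructor
  · intro hc
    change g.val 1 0 = 0 at hc
    have hdet := gl_det g
    rw [hc, mul_zero, sub_zero] at hdet
    have h0 : g.val 0 0 ≠ 0 := left_ne_zero_of_mul hdet
    have h1 : g.val 1 1 ≠ 0 := right_ne_zero_of_mul hdet
    refine ⟨g.val 0 1 / g.val 1 1, Units.mk0 _ h0, Units.mk0 _ h1, ?_⟩
    apply gl_ext <;> simp [gl_mul, uu, dd, m2_00, m2_01, m2_10, m2_11, hc, h1]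
  · rintro ⟨x, a, b, rfl⟩
    change (uu x * dd a b).val 1 0 = 0
    simp [gl_mul, uu, dd, m2_00, m2_01, m2_10, m2_11]

theorem uu_dd_inj (x y : F) (a b c d : Fˣ) (h : uu x * dd a b = uu y * dd c d) :
    x = y ∧ a = c ∧ b = d := by
  have h0 := congrArg (fun g : G2 F => g.val 0 0) h
  have h1 := congrArg (fun g : G2 F => g.val 0 1) h
  have h2 := congrArg (fun g : G2 F => g.val 1 1) h
  simp [gl_mul, uu, dd, m2_00, m2_01, m2_10, m2_11] at h0 h1 h2
  rw [h2] at h1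
  exact ⟨mul_right_cancel₀ d.ne_zero h1, Units.ext h0, Units.ext h2⟩

variable [Fintype F]

theorem card_units_nat : Nat.card Fˣ = Fintype.card F - 1 := by
  rw [Nat.card_units, Nat.card_eq_fintype_card]

theorem card_BB : Nat.card (BB F) = Fintype.card F * ((Fintype.card F - 1) * (Fintype.card F - 1)) := by
  have e : Nat.card (F × Fˣ × Fˣ) = Nat.card (BB F) := by
    apply Nat.card_eq_of_bijective
      (fun p : F × Fˣ × Fˣ => (⟨uu p.1 * dd p.2.1 p.2.2, (mem_BB _).2 ⟨_, _, _, rfl⟩⟩ : BB F))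
    constructor
    · rintro ⟨x, a, b⟩ ⟨y, c, d⟩ h
      have := uu_dd_inj _ _ _ _ _ _ (congrArg Subtype.val h)
      simpa using this
    · rintro ⟨g, hg⟩
      obtain ⟨x, a, b, h⟩ := (mem_BB _).1 hg
      exact ⟨⟨x, a, b⟩, Subtype.ext h.symm⟩
  rw [← e, Nat.card_prod, Nat.card_prod, card_units_nat, Nat.card_eq_fintype_card]

theorem card_G2 (r : ℕ) (hr : Fintype.card F = r + 1) :
    Nat.card (G2 F) = (r + 1) * (r * r) * (r + 2) := by
  have h1 : (r + 1) ^ 2 - (r + 1) ^ 0 = r * (r + 2) := by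
    apply Nat.sub_eq_of_eq_add; ring
  have h2 : (r + 1) ^ 2 - (r + 1) ^ 1 = (r + 1) * r := by
    apply Nat.sub_eq_of_eq_add; ring
  rw [Matrix.card_GL_field, Fin.prod_univ_two, hr]
  simp only [Fin.val_zero, Fin.val_one]
  rw [h1, h2]; ring

theorem index_BB : (BB F).index = Fintype.card F + 1 := by
  obtain ⟨r, hr⟩ : ∃ r, Fintype.card F = r + 1 :=
    ⟨Fintype.card F - 1, by have := Fintype.card_pos (α := F); omega⟩
  have hr1 : 0 < r := by have := Fintype.one_lt_card (α := F); omega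
  have h := (BB F).index_mul_card
  rw [card_G2 r hr, card_BB, hr, add_tsub_cancel_right] at h
  have : 0 < (r + 1) * (r * r) := by positivity
  rw [hr]
  apply Nat.eq_of_mul_eq_mul_right this
  rw [h]; ring

theorem stab_index (P : Sylow 2 (G2 F)) (i : G2 F ⧸ BB F) :
    2 ^ (Fintype.card F + 1).factorization 2 ∣ (MulAction.stabilizer (P : Subgroup (G2 F)) i).index := by
  let S := MulAction.stabilizer (P : Subgroup (G2 F)) i
  have hP2 := P.card_eq_multiplicity
  have hidx : S.index * Nat.card S = 2 ^ (Nat.card (G2 F)).factorization 2 := by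
    rw [← hP2]; exact S.index_mul_card
  have hd : Nat.card S ∣ Nat.card (BB F) := by
    have h1 : Nat.card (MulAction.stabilizer (G2 F) i) = Nat.card (BB F) := by
      have h2 := (MulAction.stabilizer (G2 F) i).index_mul_card
      rw [MulAction.index_stabilizer_of_transitive] at h2
      have h3 := (BB F).index_mul_card
      rw [Subgroup.index] at h3
      rw [← h3] at h2
      exact Nat.eq_of_mul_eq_mul_left Nat.card_pos h2
    rw [← h1]
    let f : S →* MulAction.stabilizer (G2 F) i :=
      { toFun := fun x => ⟨x.1.1, x.2⟩
        map_one' := rfl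
        map_mul' := fun _ _ => rfl }
    exact Subgroup.card_dvd_of_injective f (fun x y h => by
      apply Subtype.ext; apply Subtype.ext; exact congrArg (fun z => z.1) h)
  have hG := (BB F).index_mul_card
  rw [index_BB] at hG
  have hBpos : Nat.card (BB F) ≠ 0 := Nat.card_pos.ne'
  have hfac : (Nat.card (G2 F)).factorization 2 =
      (Fintype.card F + 1).factorization 2 + (Nat.card (BB F)).factorization 2 := by
    rw [← hG, Nat.factorization_mul (by omega) hBpos]; rfl
  have hSpow : Nat.card S ∣ 2 ^ (Nat.card (BB F)).factorization 2 := by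
    have hS2 : Nat.card S ∣ 2 ^ (Nat.card (G2 F)).factorization 2 := ⟨_, by rw [← hidx, mul_comm]⟩
    obtain ⟨j, -, hj⟩ := (Nat.dvd_prime_pow Nat.prime_two).1 hS2
    rw [hj] at hd ⊢
    exact pow_dvd_pow 2 ((Nat.prime_two.pow_dvd_iff_le_factorization hBpos).1 hd)
  obtain ⟨t, ht⟩ := hSpow
  rw [hfac, pow_add, ht] at hidx
  refine ⟨t, ?_⟩
  have hS : 0 < Nat.card S := Nat.card_pos
  apply Nat.eq_of_mul_eq_mul_right hS
  change S.index * _ = _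
  rw [hidx]; ring

end borel

theorem exists_psi (F : Type) [Field F] [Fintype F] : ∃ ψ : AddChar F ℂ, ψ ≠ 1 := by
  obtain ⟨ψ, h⟩ := (AddChar.exists_apply_ne_zero (a := (1 : F))).2 one_ne_zero
  exact ⟨ψ, fun h1 => h (by rw [h1]; simp)⟩

section nc
variable {F : Type} [Field F] [Fintype F] {V : Type} [AddCommGroup V] [Module ℂ V]
    [FiniteDimensional ℂ V] (ρ : Representation ℂ (G2 F) V) [IsIrreducible ρ]

/-- the diagonal torus -/
def TT (F : Type) [Field F] : Subgroup (G2 F) where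
  carrier := {g | ∃ a b, g = dd a b}
  one_mem' := ⟨1, 1, dd_one.symm⟩
  mul_mem' := by
    rintro _ _ ⟨a, b, rfl⟩ ⟨c, d, rfl⟩
    exact ⟨_, _, dd_mul _ _ _ _⟩
  inv_mem' := by
    rintro _ ⟨a, b, rfl⟩
    exact ⟨_, _, ddinv _ _⟩

theorem borel_vec (h : LinearMap.range (pr ρ 1) ≠ ⊥) :
    ∃ v : V, v ≠ 0 ∧ ∀ b ∈ BB F, ∃ t : ℂ, ρ b v = t • v := by
  obtain ⟨v, hv, hv0, ht⟩ := exists_eigen ρ (TT F) (by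
    rintro _ ⟨a, b, rfl⟩ _ ⟨c, d, rfl⟩
    rw [dd_mul, dd_mul, mul_comm a, mul_comm b]) (LinearMap.range (pr ρ 1)) h (by
    rintro _ ⟨a, b, rfl⟩ w hw
    rw [mem_pr] at hw ⊢
    intro x
    have e : uu x * dd a b = dd a b * uu ((a⁻¹ : Fˣ) * x * b) := by
      rw [dd_uu]; congr 2; simp [mul_assoc]
    rw [← Module.End.mul_apply, ← map_mul, e, map_mul, Module.End.mul_apply, hw]
    simp)
  refine ⟨v, hv0, fun b hb => ?_⟩
  obtain ⟨x, a, c, rfl⟩ := (mem_BB _).1 hb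
  obtain ⟨t, ht⟩ := ht (dd a c) ⟨_, _, rfl⟩
  rw [mem_pr] at hv
  refine ⟨t, ?_⟩
  rw [map_mul, Module.End.mul_apply, ht, map_smul, hv]
  simp

theorem dim_one_of_triv (hu : ∀ x : F, ρ (uu x) = 1) (h : LinearMap.range (pr ρ 1) ≠ ⊥) :
    finrank ℂ V = 1 := by
  obtain ⟨v, hv0, hv⟩ := borel_vec ρ h
  have hl : ρ (aa 1 1 * uu (-1) * aa 1 1) = 1 := by
    rw [map_mul, map_mul, hu, mul_one, ← map_mul, aa_mul, mul_one, dd_one, map_one]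
  have hw : ρ (aa 1 (-1)) = 1 := by
    have e : (aa 1 (-1) : G2 F) = uu 1 * (aa 1 1 * uu (-1) * aa 1 1) * uu 1 := by
      apply gl_ext <;> simp [gl_mul, uu, aa, m2_00, m2_01, m2_10, m2_11]
    rw [e, map_mul, map_mul, hu, hl, mul_one, mul_one]
  have hall : ∀ g, ∃ t : ℂ, ρ g v = t • v := by
    intro g
    rcases bruhat g with ⟨x, a, b, y, rfl⟩ | ⟨x, a, b, rfl⟩
    · have e : aa a b = dd a (-b) * aa 1 (-1) := by rw [dd_aa]; simp
      obtain ⟨t, ht⟩ := hv (dd a (-b)) ((mem_BB _).2 ⟨0, a, -b, by rw [uu_zero, one_mul]⟩)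
      refine ⟨t, ?_⟩
      rw [e, map_mul, map_mul, map_mul, hu, hu, hw, mul_one, mul_one, one_mul, ht]
    · exact hv _ ((mem_BB _).2 ⟨_, _, _, rfl⟩)
  have htop : Submodule.span ℂ {v} = ⊤ := by
    refine irr_top ρ _ (by simpa using hv0) ?_
    intro g w hw
    obtain ⟨s, rfl⟩ := Submodule.mem_span_singleton.1 hw
    obtain ⟨t, ht⟩ := hall g
    rw [map_smul, ht]
    exact Submodule.smul_mem _ _ (Submodule.smul_mem _ _ (Submodule.mem_span_singleton_self v))
  rw [← finrank_top ℂ V, ← htop, finrank_span_singleton hv0]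

theorem SI_odd (P : Subgroup (G2 F)) (h : Odd (finrank ℂ V)) :
    SI (2 ^ (finrank ℂ V).factorization 2) (fun x : P => ρ.character x) := by
  rw [Nat.factorization_eq_zero_of_not_dvd (by rwa [← even_iff_two_dvd, Nat.not_even_iff_odd]), pow_zero]
  exact SI_top (ρ.comp P.subtype)

theorem noncusp (hodd : Odd (Fintype.card F)) (P : Sylow 2 (G2 F))
    (h : LinearMap.range (pr ρ 1) ≠ ⊥) :
    SI (2 ^ (finrank ℂ V).factorization 2) (fun x : (P : Subgroup (G2 F)) => ρ.character x) := by
  obtain ⟨ψ, hψ⟩ := exists_psi F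
  have hd := dim_formula ρ ψ hψ
  have hq := Fintype.one_lt_card (α := F)
  rcases Nat.le_one_iff_eq_zero_or_eq_one.1 (gelfand ρ ψ hψ) with hm | hm
  · have := dim_one_of_triv ρ (triv_of_zero ρ ψ hψ hm) h
    exact SI_odd ρ _ (by rw [this]; exact odd_one)
  obtain ⟨v, hv0, hv⟩ := borel_vec ρ h
  obtain ⟨hle, heq⟩ := monoLemma ρ (BB F) v hv0 hv
  rw [index_BB] at hle heq
  rw [hm, mul_one] at hd
  have hn : 0 < finrank ℂ (LinearMap.range (pr ρ (1 : AddChar F ℂ))) := by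
    rw [Nat.pos_iff_ne_zero]
    intro h0
    exact h (Submodule.finrank_eq_zero.1 h0)
  rcases (show finrank ℂ V = Fintype.card F ∨ finrank ℂ V = Fintype.card F + 1 by omega) with h1 | h1
  · exact SI_odd ρ _ (by rwa [h1])
  · obtain ⟨c, c1, cm, hc⟩ := heq h1
    have := lemmaM P.isPGroup' (I := G2 F ⧸ BB F) (fun x j => c x j) c1
      (fun g h j => cm g h j) ((Fintype.card F + 1).factorization 2) (stab_index P)
    rw [h1]
    convert this using 2 with x
    rw [hc]
    refine Finset.sum_congr rfl fun j _ => ?_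
    by_cases hj : x • j = j
    · rw [if_pos hj]; exact if_pos hj
    · rw [if_neg hj]; exact if_neg hj

end nc


section cusp
variable {F : Type} [Field F] [Fintype F] {V : Type} [AddCommGroup V] [Module ℂ V]
    [FiniteDimensional ℂ V] (ρ : Representation ℂ (G2 F) V) [IsIrreducible ρ]

theorem cusp_dim (h : LinearMap.range (pr ρ 1) = ⊥) : finrank ℂ V = Fintype.card F - 1 := by
  obtain ⟨ψ, hψ⟩ := exists_psi F
  have hd := dim_formula ρ ψ hψ
  rw [h, finrank_bot, zero_add] at hd
  have := irr_nontrivial ρ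
  have hpos : 0 < finrank ℂ V := finrank_pos
  rcases Nat.le_one_iff_eq_zero_or_eq_one.1 (gelfand ρ ψ hψ) with hm | hm
  · rw [hm, mul_zero] at hd; omega
  · rw [hd, hm, mul_one]

theorem cusp_dd (h : LinearMap.range (pr ρ 1) = ⊥) (a b : Fˣ) (hab : a ≠ b) :
    ρ.character (dd a b) = 0 := by
  have h0 : pr ρ 1 = 0 := LinearMap.range_eq_bot.1 h
  have h1 : ∑ x : F, ρ (uu x) = 0 := by
    rw [pr] at h0
    simpa [qne] using h0
  have hne : (1 : F) - (a : F) * (b⁻¹ : Fˣ) ≠ 0 := by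
    intro h
    apply hab
    have : (a : F) * (b⁻¹ : Fˣ) = 1 := (sub_eq_zero.1 h).symm
    have h3 : a * b⁻¹ = 1 := Units.ext (by simpa using this)
    exact mul_inv_eq_one.1 h3
  have h2 : ∀ x : F, ρ.character (uu x * dd a b) = ρ.character (dd a b) := by
    intro x
    let s := x / ((1 : F) - (a : F) * (b⁻¹ : Fˣ))
    have hs : s * ((1 : F) - (a : F) * (b⁻¹ : Fˣ)) = x := div_mul_cancel₀ _ hne
    have e : uu x * dd a b = uu s * dd a b * (uu s)⁻¹ := by
      rw [uu_inv, mul_assoc, dd_uu, ← mul_assoc, ← uu_add]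
      congr 2
      linear_combination -hs
    rw [e, Representation.char_conj]
  have h3 : ∑ x : F, ρ.character (uu x * dd a b) = 0 := by
    have : ∑ x : F, ρ.character (uu x * dd a b) = LinearMap.trace ℂ V ((∑ x : F, ρ (uu x)) * ρ (dd a b)) := by
      rw [Finset.sum_mul, map_sum]
      refine Finset.sum_congr rfl fun x _ => ?_
      rw [← map_mul]; rfl
    rw [this, h1, zero_mul, map_zero]
  rw [Finset.sum_congr rfl fun x _ => h2 x, Finset.sum_const, Finset.card_univ, nsmul_eq_mul] at h3
  exact (mul_eq_zero.1 h3).resolve_left qne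

theorem cusp_aa (hodd : (2 : F) ≠ 0) (h : LinearMap.range (pr ρ 1) = ⊥) (a b t : Fˣ) (hab : a * b = t * t) :
    ρ.character (aa a b) = 0 := by
  have hd : (a : F) * (-t : F) - a * t ≠ 0 := by
    have : (a : F) * (-t : F) - a * t = - (2 * a * t) := by ring
    rw [this, neg_ne_zero]
    simp [hodd]
  have hab' : (a : F) * b = t * t := by exact_mod_cast congrArg Units.val hab
  have e : aa a b * m2 (a : F) a t (-t) hd = m2 (a : F) a t (-t) hd * dd t (-t) := by
    apply gl_ext <;> simp [gl_mul, dd, aa, m2_00, m2_01, m2_10, m2_11] <;>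
      linear_combination hab'
  rw [← mul_inv_eq_iff_eq_mul.2 e.symm] at *
  rw [Representation.char_conj]
  apply cusp_dd ρ h
  intro h1
  have h2 : (t : F) = -t := by exact_mod_cast congrArg Units.val h1
  have h3 : (2 : F) * t = 0 := by linear_combination h2
  simp [hodd] at h3

theorem dd_central (c : Fˣ) (g : G2 F) : dd c c * g = g * dd c c := by
  apply gl_ext <;> simp [gl_mul, dd, m2_00, m2_01, m2_10, m2_11, mul_comm]

theorem central_scalar (c : Fˣ) : ∃ t : ℂ, ∀ v, ρ (dd c c) v = t • v := by
  have := irr_nontrivial ρ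
  obtain ⟨μ, hμ⟩ := Module.End.exists_eigenvalue (ρ (dd c c))
  refine ⟨μ, fun v => ?_⟩
  have htop : Module.End.eigenspace (ρ (dd c c)) μ = ⊤ := by
    refine irr_top ρ _ hμ ?_
    intro g w hw
    rw [Module.End.mem_eigenspace_iff] at hw ⊢
    rw [← Module.End.mul_apply, ← map_mul, dd_central, map_mul, Module.End.mul_apply, hw, map_smul]
  rw [← Module.End.mem_eigenspace_iff, htop]
  trivial

end cusp

section transport
variable {F : Type} [Field F] [Fintype F] {V : Type} [AddCommGroup V] [Module ℂ V]
    [FiniteDimensional ℂ V] (ρ : Representation ℂ (G2 F) V)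

open scoped Pointwise in
theorem transport (P : Sylow 2 (G2 F)) (P0 : Subgroup (G2 F))
    (hc : Nat.card P0 = 2 ^ (Nat.card (G2 F)).factorization 2) (m : ℕ)
    (h : SI m (fun x : P0 => ρ.character x)) : SI m (fun x : (P : Subgroup (G2 F)) => ρ.character x) := by
  obtain ⟨g, hg⟩ := MulAction.exists_smul_eq (G2 F) P (Sylow.ofCard P0 hc)
  have hmem : ∀ x : G2 F, x ∈ (P : Subgroup (G2 F)) ↔ g * x * g⁻¹ ∈ P0 := by
    intro x
    have : P0 = MulAut.conj g • (P : Subgroup (G2 F)) := by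
      have := congrArg (fun S : Sylow 2 (G2 F) => (S : Subgroup (G2 F))) hg
      exact this.symm
    rw [this, Subgroup.mem_pointwise_smul_iff_inv_smul_mem]
    simp [← map_inv, MulAut.smul_def, mul_assoc]
  let e : (P : Subgroup (G2 F)) ≃* P0 :=
    { toFun := fun x => ⟨g * x.1 * g⁻¹, (hmem _).1 x.2⟩
      invFun := fun x => ⟨g⁻¹ * x.1 * g, (hmem _).2 (by simpa [mul_assoc] using x.2)⟩
      left_inv := fun x => Subtype.ext (by simp [mul_assoc])
      right_inv := fun x => Subtype.ext (by simp [mul_assoc])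
      map_mul' := fun x y => Subtype.ext (by simp [mul_assoc]) }
  have := SI_comap e h
  convert this using 2 with x
  exact (Representation.char_conj ρ _ _).symm

end transport


section q3
variable {F : Type} [Field F]

/-- nonsplit torus -/
def EE (F : Type) [Field F] : Subgroup (G2 F) where
  carrier := {g | g.val 1 1 = g.val 0 0 ∧ g.val 0 1 = - g.val 1 0}
  one_mem' := by
    change (1 : G2 F).val 1 1 = (1 : G2 F).val 0 0 ∧ (1 : G2 F).val 0 1 = - (1 : G2 F).val 1 0
    rw [gl_one00, gl_one01, gl_one10, gl_one11]; simp
  mul_mem' := by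
    intro a b ha hb
    simp only [Set.mem_ofPred_eq] at *
    rw [gl_mul, gl_mul, gl_mul, gl_mul, ha.1, hb.1, ha.2, hb.2]
    constructor <;> ring
  inv_mem' := by
    intro g hg
    simp only [Set.mem_ofPred_eq] at *
    have hd := gl_det g
    rw [hg.1, hg.2] at hd
    have hd2 : g.val 0 0 * g.val 0 0 - (- -g.val 1 0) * (-g.val 1 0) ≠ 0 := by
      intro h; apply hd; linear_combination h
    have e : g⁻¹ * g = 1 := inv_mul_cancel g
    have h00 := congrArg (fun g : G2 F => g.val 0 0) e
    have h01 := congrArg (fun g : G2 F => g.val 0 1) e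
    have h10 := congrArg (fun g : G2 F => g.val 1 0) e
    have h11 := congrArg (fun g : G2 F => g.val 1 1) e
    simp only [gl_mul, gl_one00, gl_one01, gl_one10, gl_one11, hg.1, hg.2] at h00 h01 h10 h11
    constructor
    · apply mul_left_cancel₀ hd
      linear_combination g.val 0 0 * h11 + (g.val 1 0) * h10 - g.val 0 0 * h00 + g.val 1 0 * h01
    · apply mul_left_cancel₀ hd
      linear_combination g.val 0 0 * h01 + (g.val 1 0) * h00 - g.val 1 0 * h11 + g.val 0 0 * h10

theorem mem_EE (g : G2 F) : g ∈ EE F ↔ g.val 1 1 = g.val 0 0 ∧ g.val 0 1 = - g.val 1 0 := Iff.rfl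

theorem EE_comm (a b : G2 F) (ha : a ∈ EE F) (hb : b ∈ EE F) : a * b = b * a := by
  rw [mem_EE] at ha hb
  apply gl_ext <;> simp only [gl_mul, ha.1, ha.2, hb.1, hb.2] <;> ring

/-- reflection -/
noncomputable def ss : G2 F := dd 1 (-1)

theorem ss_mul : (ss : G2 F) * ss = 1 := by
  rw [ss, dd_mul]; simp [dd_one]

/-- rotation -/
noncomputable def jj : G2 F := aa (-1) 1

theorem jj_mul : (jj : G2 F) * jj = dd (-1) (-1) := by
  rw [jj, aa_mul]; simp

theorem jj_mem : (jj : G2 F) ∈ EE F := by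
  rw [mem_EE]
  simp [jj, aa, m2_00, m2_01, m2_10, m2_11]

theorem ss_entries (g : G2 F) : (g * ss).val 0 0 = g.val 0 0 ∧ (g * ss).val 0 1 = - g.val 0 1 ∧
    (g * ss).val 1 0 = g.val 1 0 ∧ (g * ss).val 1 1 = - g.val 1 1 := by
  simp [gl_mul, ss, dd, m2_00, m2_01, m2_10, m2_11]

theorem ss_entries2 (g : G2 F) : (ss * g).val 0 0 = g.val 0 0 ∧ (ss * g).val 0 1 = g.val 0 1 ∧
    (ss * g).val 1 0 = - g.val 1 0 ∧ (ss * g).val 1 1 = - g.val 1 1 := by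
  simp [gl_mul, ss, dd, m2_00, m2_01, m2_10, m2_11]

theorem ss_conj (g : G2 F) (hg : g ∈ EE F) : ss * g * ss ∈ EE F := by
  rw [mem_EE] at *
  obtain ⟨h1, h2, h3, h4⟩ := ss_entries (ss * g)
  obtain ⟨k1, k2, k3, k4⟩ := ss_entries2 g
  rw [h1, h2, h3, h4, k1, k2, k3, k4, hg.1, hg.2]
  simp

/-- normalizer of the nonsplit torus -/
def GG (F : Type) [Field F] : Subgroup (G2 F) where
  carrier := {g | g ∈ EE F ∨ g * ss ∈ EE F}
  one_mem' := Or.inl (one_mem _)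
  mul_mem' := by
    rintro a b (ha | ha) (hb | hb)
    · exact Or.inl (mul_mem ha hb)
    · exact Or.inr (by rw [mul_assoc]; exact mul_mem ha hb)
    · right
      have : a * b * ss = (a * ss) * (ss * b * ss) := by
        calc a * b * ss = a * (ss * ss) * b * ss := by rw [ss_mul, mul_one]
          _ = _ := by simp only [mul_assoc]
      rw [this]
      exact mul_mem ha (ss_conj b hb)
    · left
      have : a * b = (a * ss) * (ss * (b * ss) * ss) := by
        have e : ss * (b * ss) * ss = ss * b := by
          rw [mul_assoc, mul_assoc b, ss_mul, mul_one]
        rw [e, mul_assoc, ← mul_assoc ss, ss_mul, one_mul]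
      rw [this]
      exact mul_mem ha (ss_conj _ hb)
  inv_mem' := by
    rintro a (ha | ha)
    · exact Or.inl (inv_mem ha)
    · right
      have : a⁻¹ * ss = ss * (a * ss)⁻¹ * ss := by
        have hs : (ss : G2 F)⁻¹ = ss := inv_eq_of_mul_eq_one_right ss_mul
        rw [mul_inv_rev, hs, ← mul_assoc, ss_mul, one_mul]
      rw [this]
      exact ss_conj _ (inv_mem ha)

theorem mem_GG (g : G2 F) : g ∈ GG F ↔ g ∈ EE F ∨ g * ss ∈ EE F := Iff.rfl

theorem ss_mem : ss ∈ GG F := Or.inr (by rw [ss_mul]; exact one_mem _)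

theorem EE_le : EE F ≤ GG F := fun _ h => Or.inl h

theorem ss_nmem (h2 : (2 : F) ≠ 0) : (ss : G2 F) ∉ EE F := by
  rw [mem_EE]
  simp only [ss, dd, m2_00, m2_11]
  rintro ⟨h, -⟩
  apply h2
  simp at h
  linear_combination -h

theorem idx2 (h2 : (2 : F) ≠ 0) (H : Subgroup (G2 F)) (hH : H ≤ GG F) (hs : ss ∈ H) :
    ((EE F).subgroupOf H).index = 2 := by
  rw [Subgroup.index_eq_two_iff]
  refine ⟨⟨ss, hs⟩, fun b => ?_⟩
  simp only [Subgroup.mem_subgroupOf, Subgroup.coe_mul]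
  rcases (mem_GG _).1 (hH b.2) with h | h
  · refine Or.inr ⟨h, fun h3 => ss_nmem h2 ?_⟩
    exact (Subgroup.mul_mem_cancel_left _ h).1 h3
  · refine Or.inl ⟨h, fun h3 => ss_nmem h2 ?_⟩
    exact (Subgroup.mul_mem_cancel_left _ h3).1 h

variable [Fintype F]

theorem card_EE (hs : ¬ IsSquare (-1 : F)) : Nat.card (EE F) = Fintype.card F * Fintype.card F - 1 := by
  have e : Nat.card {p : F × F // p ≠ 0} = Nat.card (EE F) := by
    have hd : ∀ p : {p : F × F // p ≠ 0}, p.1.1 * p.1.1 - (-p.1.2) * p.1.2 ≠ 0 := by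
      rintro ⟨⟨x, y⟩, hp⟩ h
      simp only at h
      by_cases hy : y = 0
      · subst hy
        simp at h
        subst h
        exact hp rfl
      · apply hs
        refine ⟨x / y, ?_⟩
        field_simp
        linear_combination -h
    apply Nat.card_eq_of_bijective
      (fun p : {p : F × F // p ≠ 0} => (⟨m2 p.1.1 (-p.1.2) p.1.2 p.1.1 (hd p), by
        rw [mem_EE]; simp [m2_00, m2_01, m2_10, m2_11]⟩ : EE F))
    constructor
    · rintro ⟨⟨x, y⟩, hp⟩ ⟨⟨z, w⟩, hp2⟩ h
      have h0 := congrArg (fun g : EE F => g.1.val 0 0) h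
      have h1 := congrArg (fun g : EE F => g.1.val 1 0) h
      simp only [m2_00, m2_10] at h0 h1
      simp [h0, h1]
    · rintro ⟨g, hg⟩
      refine ⟨⟨(g.val 0 0, g.val 1 0), ?_⟩, ?_⟩
      · intro h
        have h1 : g.val 0 0 = 0 := congrArg Prod.fst h
        have h2 : g.val 1 0 = 0 := congrArg Prod.snd h
        apply gl_det g
        rw [h1, h2]; simp
      · apply Subtype.ext
        rw [mem_EE] at hg
        apply gl_ext <;> simp [m2_00, m2_01, m2_10, m2_11, hg.1, hg.2]
  rw [← e, Nat.card_eq_fintype_card, Fintype.card_subtype_compl]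
  simp

theorem card_GG (h2 : (2 : F) ≠ 0) (hs : ¬ IsSquare (-1 : F)) :
    Nat.card (GG F) = 2 * (Fintype.card F * Fintype.card F - 1) := by
  rw [← ((EE F).subgroupOf (GG F)).index_mul_card, idx2 h2 _ le_rfl ss_mem,
    Nat.card_congr (Subgroup.subgroupOfEquivOfLe EE_le).toEquiv, card_EE hs]

theorem ss_jj : (ss : G2 F) * jj * ss = jj⁻¹ := by
  symm
  rw [inv_eq_iff_mul_eq_one]
  apply gl_ext <;> simp [gl_mul, ss, jj, dd, aa, m2_00, m2_01, m2_10, m2_11]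

theorem exists_P0 (h2 : (2 : F) ≠ 0) (hq : Fintype.card F % 4 = 3) :
    ∃ P0 : Subgroup (G2 F), P0 ≤ GG F ∧ ss ∈ P0 ∧ jj ∈ P0 ∧
      Nat.card P0 = 2 ^ (Nat.card (G2 F)).factorization 2 := by
  have hs : ¬ IsSquare (-1 : F) := by
    rw [FiniteField.isSquare_neg_one_iff]; simpa using hq
  let s : GG F := ⟨ss, ss_mem⟩
  let j : GG F := ⟨jj, EE_le jj_mem⟩
  have hsp : IsPGroup 2 (Subgroup.zpowers s) := by
    have : orderOf s ∣ 2 ^ 1 := orderOf_dvd_of_pow_eq_one (by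
      rw [pow_one, pow_two]; exact Subtype.ext ss_mul)
    obtain ⟨k, -, hk⟩ := (Nat.dvd_prime_pow Nat.prime_two).1 this
    exact IsPGroup.of_card (n := k) (by rw [Nat.card_zpowers, hk])
  have hjp : IsPGroup 2 (Subgroup.zpowers j) := by
    have : orderOf j ∣ 2 ^ 2 := orderOf_dvd_of_pow_eq_one (by
      apply Subtype.ext
      change jj ^ 4 = 1
      rw [show (4 : ℕ) = 2 * 2 from rfl, pow_mul, pow_two jj, jj_mul, pow_two, dd_mul]
      simp [dd_one])
    obtain ⟨k, -, hk⟩ := (Nat.dvd_prime_pow Nat.prime_two).1 this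
    exact IsPGroup.of_card (n := k) (by rw [Nat.card_zpowers, hk])
  have hsinv : (ss : G2 F)⁻¹ = ss := inv_eq_of_mul_eq_one_right ss_mul
  have hnorm : (Subgroup.zpowers j).Normal := by
    have key : ∀ g : GG F, g * j * g⁻¹ ∈ Subgroup.zpowers j := by
      rintro ⟨g, hg⟩
      rcases (mem_GG _).1 hg with h | h
      · have : (⟨g, hg⟩ : GG F) * j * (⟨g, hg⟩ : GG F)⁻¹ = j := by
          apply Subtype.ext
          change g * jj * g⁻¹ = jj
          rw [EE_comm g jj h jj_mem, mul_inv_cancel_right]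
        rw [this]; exact Subgroup.mem_zpowers j
      · have : (⟨g, hg⟩ : GG F) * j * (⟨g, hg⟩ : GG F)⁻¹ = j⁻¹ := by
          apply Subtype.ext
          change g * jj * g⁻¹ = jj⁻¹
          have e : g * jj * g⁻¹ = (g * ss) * (ss * jj * ss) * (g * ss)⁻¹ := by
            rw [mul_inv_rev, hsinv]
            calc g * jj * g⁻¹ = g * (ss * ss) * jj * (ss * ss) * g⁻¹ := by rw [ss_mul, mul_one, mul_one]
              _ = _ := by simp only [mul_assoc]
          rw [e, ss_jj, EE_comm _ _ h (inv_mem jj_mem), mul_inv_cancel_right]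
        rw [this]; exact inv_mem (Subgroup.mem_zpowers j)
    constructor
    rintro n ⟨k, rfl⟩ g
    have : g * j ^ k * g⁻¹ = (g * j * g⁻¹) ^ k := by
      rw [conj_zpow]
    simp only [this]
    exact zpow_mem (key g) k
  obtain ⟨S, hS⟩ := (hsp.to_sup_of_normal_right hjp).exists_le_sylow
  have hcS := S.card_eq_multiplicity
  refine ⟨(S : Subgroup (GG F)).map (GG F).subtype, ?_, ?_, ?_, ?_⟩
  · rintro _ ⟨x, -, rfl⟩; exact x.2
  · exact ⟨s, hS (Subgroup.mem_sup_left (Subgroup.mem_zpowers s)), rfl⟩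
  · exact ⟨j, hS (Subgroup.mem_sup_right (Subgroup.mem_zpowers j)), rfl⟩
  · rw [Subgroup.card_map_of_injective (Subgroup.subtype_injective _), hcS]
    congr 1
    obtain ⟨k, hk⟩ : ∃ k, Fintype.card F = 4 * k + 3 := ⟨Fintype.card F / 4, by omega⟩
    have hG := card_G2 (F := F) (4 * k + 2) (by omega)
    have hGG := card_GG h2 hs
    have : Nat.card (G2 F) = ((4 * k + 3) * (2 * k + 1)) * Nat.card (GG F) := by
      rw [hG, hGG, hk]
      have : (4 * k + 3) * (4 * k + 3) - 1 = (4 * k + 2) * (4 * k + 4) := by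
        apply Nat.sub_eq_of_eq_add; ring
      rw [this]; ring
    rw [this, Nat.factorization_mul (by positivity) Nat.card_pos.ne']
    have ho : Odd ((4 * k + 3) * (2 * k + 1)) := by
      apply Odd.mul
      · exact ⟨2 * k + 1, by ring⟩
      · exact ⟨k, rfl⟩
    have : ((4 * k + 3) * (2 * k + 1)).factorization 2 = 0 :=
      Nat.factorization_eq_zero_of_not_dvd (by rwa [← even_iff_two_dvd, Nat.not_even_iff_odd])
    simp only [Finsupp.add_apply, this, zero_add]

end q3


section cusp3
variable {F : Type} [Field F] [Fintype F] {V : Type} [AddCommGroup V] [Module ℂ V]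
    [FiniteDimensional ℂ V] (ρ : Representation ℂ (G2 F) V) [IsIrreducible ρ]

theorem pow2_units (hq : Fintype.card F % 4 = 3) (u : Fˣ) (n : ℕ) (h : u ^ (2 ^ n) = 1) :
    u = 1 ∨ u = -1 := by
  have h1 : orderOf u ∣ 2 ^ n := orderOf_dvd_of_pow_eq_one h
  have h2 : orderOf u ∣ Fintype.card F - 1 := by
    rw [← card_units_nat]; exact orderOf_dvd_natCard u
  obtain ⟨k, -, hk⟩ := (Nat.dvd_prime_pow Nat.prime_two).1 h1
  have hk1 : k ≤ 1 := by
    by_contra hk2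
    have : 2 ^ 2 ∣ orderOf u := by rw [hk]; exact pow_dvd_pow 2 (by omega)
    have := this.trans h2
    omega
  have h3 : u ^ 2 = 1 := by
    apply orderOf_dvd_iff_pow_eq_one.1
    rw [hk]
    exact (pow_dvd_pow 2 hk1).trans (by norm_num)
  have h4 : (u : F) * u = 1 := by
    have := congrArg Units.val h3
    rw [pow_two] at this
    exact this
  rcases mul_self_eq_one_iff.1 h4 with h | h
  · exact Or.inl (Units.ext h)
  · exact Or.inr (Units.ext h)

theorem cusp3 (hq : Fintype.card F % 4 = 3) (P : Sylow 2 (G2 F))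
    (h : LinearMap.range (pr ρ 1) = ⊥) :
    SI (2 ^ (finrank ℂ V).factorization 2) (fun x : (P : Subgroup (G2 F)) => ρ.character x) := by
  have h2 : (2 : F) ≠ 0 := by
    intro h0
    have hc : CharP F 2 := CharTwo.of_one_ne_zero_of_two_eq_zero one_ne_zero h0
    have := FiniteField.even_card_of_char_two (F := F) (by
      exact ringChar.eq_iff.2 hc)
    omega
  have hfac : (finrank ℂ V).factorization 2 = 1 := by
    rw [cusp_dim ρ h]
    obtain ⟨k, hk⟩ : ∃ k, Fintype.card F = 4 * k + 3 := ⟨Fintype.card F / 4, by omega⟩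
    have e : Fintype.card F - 1 = 2 * (2 * k + 1) := by omega
    rw [e, Nat.factorization_mul (by omega) (by omega)]
    have : (2 * k + 1).factorization 2 = 0 := Nat.factorization_eq_zero_of_not_dvd (by omega)
    simp [this, Nat.prime_two.factorization_self]
  rw [hfac, pow_one]
  obtain ⟨P0, hle, hs, hj, hcard⟩ := exists_P0 h2 hq
  refine transport ρ P P0 hcard 2 ?_
  have hP : IsPGroup 2 P0 := IsPGroup.of_card hcard
  let σ : Representation ℂ P0 V := ρ.comp P0.subtype
  let s : P0 := ⟨ss, hs⟩
  let j : P0 := ⟨jj, hj⟩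
  have hss : s * s = 1 := Subtype.ext ss_mul
  have hne : (1 : Fˣ) ≠ -1 := by
    intro h
    have h3 : (1 : F) = -1 := by exact congrArg Units.val h
    apply h2; linear_combination h3
  refine lemmaQ3 hP σ ((EE F).subgroupOf P0) ?_ (idx2 h2 P0 hle hs) s ?_ ?_ ?_
  · intro a ha b hb
    exact Subtype.ext (EE_comm _ _ ha hb)
  · exact ss_nmem h2
  · intro θ g
    have hnz : ∀ x, θ x ≠ 0 := fun x hx => by
      have := map_mul θ x x⁻¹
      rw [mul_inv_cancel, map_one, hx, zero_mul] at this
      exact one_ne_zero this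
    have hts : θ s ^ 2 = 1 := by rw [pow_two, ← map_mul, hss, map_one]
    have hjs : s * j * s * j = 1 := by
      apply Subtype.ext
      change ss * jj * ss * jj = 1
      rw [ss_jj, inv_mul_cancel]
    have htj : θ (j * j) = 1 := by
      have := congrArg θ hjs
      simp only [map_mul, map_one] at this ⊢
      linear_combination this - θ j * θ j * hts
    have hE : ∀ c : P0, c.1 ∈ EE F → θ c ^ 2 = 1 := by
      intro c hc
      have hcm := (mem_EE _).1 hc
      have hdet : c.1.val 0 0 * c.1.val 0 0 + c.1.val 1 0 * c.1.val 1 0 ≠ 0 := by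
        have := gl_det c.1
        rw [hcm.1, hcm.2] at this
        intro h0; apply this; linear_combination h0
      let u : Fˣ := Units.mk0 _ hdet
      have e1 : s.1 * c.1 * s.1 * c.1 = dd u u := by
        obtain ⟨h1, h2, h3, h4⟩ := ss_entries (ss * c.1)
        obtain ⟨k1, k2, k3, k4⟩ := ss_entries2 c.1
        change ss * c.1 * ss * c.1 = _
        apply gl_ext <;> rw [gl_mul] <;>
          simp [h1, h2, h3, h4, k1, k2, k3, k4, hcm.1, hcm.2, dd, m2_00, m2_01, m2_10, m2_11, u] <;> ring
      have hu : u = 1 ∨ u = -1 := by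
        obtain ⟨n, hn⟩ := hP (s * c * s * c)
        have hn' : (dd u u) ^ (2 ^ n) = (1 : G2 F) := by
          rw [← e1]; exact congrArg Subtype.val hn
        have hp : ∀ m : ℕ, (dd u u) ^ m = dd (u ^ m) (u ^ m) := by
          intro m
          induction m with
          | zero => simp [dd_one]
          | succ m ih => rw [pow_succ, ih, dd_mul, pow_succ]
        rw [hp] at hn'
        refine pow2_units hq u n (Units.ext ?_)
        have := congrArg (fun g : G2 F => g.val 0 0) hn'
        simp only [gl_one00] at this
        exact this
      have e2 : θ (s * c * s * c) = 1 := by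
        rcases hu with hu | hu
        · rw [hu, dd_one] at e1
          have : s * c * s * c = 1 := Subtype.ext e1
          rw [this, map_one]
        · rw [hu, ← jj_mul] at e1
          have : s * c * s * c = j * j := Subtype.ext e1
          rw [this, htj]
      simp only [map_mul] at e2
      linear_combination e2 - θ c * θ c * hts
    rcases (mem_GG _).1 (hle g.2) with hg | hg
    · exact hE g hg
    · have := hE (g * s) hg
      rw [map_mul, mul_pow, hts, mul_one] at this
      exact this
  · exact cusp_dd ρ h 1 (-1) hne

end cusp3


section q1
variable {F : Type} [Field F]

theorem aainv (a b : Fˣ) : (aa a b)⁻¹ = aa b⁻¹ a⁻¹ := by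
  rw [inv_eq_iff_mul_eq_one, aa_mul]; simp [dd_one]

theorem dd_inj {a b c d : Fˣ} (h : dd a b = dd c d) : a = c ∧ b = d :=
  ⟨Units.ext (congrArg (fun g : G2 F => g.val 0 0) h), Units.ext (congrArg (fun g : G2 F => g.val 1 1) h)⟩

theorem aa_inj {a b c d : Fˣ} (h : aa a b = aa c d) : a = c ∧ b = d :=
  ⟨Units.ext (congrArg (fun g : G2 F => g.val 0 1) h), Units.ext (congrArg (fun g : G2 F => g.val 1 0) h)⟩

theorem dd_ne_aa {a b c d : Fˣ} (h : dd a b = aa c d) : False := by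
  have := congrArg (fun g : G2 F => g.val 0 0) h
  exact a.ne_zero this

/-- monomial matrices with entries in a subgroup -/
def PP (C : Subgroup Fˣ) : Subgroup (G2 F) where
  carrier := {g | ∃ a ∈ C, ∃ b ∈ C, g = dd a b ∨ g = aa a b}
  one_mem' := ⟨1, one_mem _, 1, one_mem _, Or.inl dd_one.symm⟩
  mul_mem' := by
    rintro _ _ ⟨a, ha, b, hb, rfl | rfl⟩ ⟨c, hc, d, hd, rfl | rfl⟩
    · exact ⟨_, mul_mem ha hc, _, mul_mem hb hd, Or.inl (dd_mul _ _ _ _)⟩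
    · exact ⟨_, mul_mem ha hc, _, mul_mem hb hd, Or.inr (dd_aa _ _ _ _)⟩
    · exact ⟨_, mul_mem ha hd, _, mul_mem hb hc, Or.inr (aa_dd _ _ _ _)⟩
    · exact ⟨_, mul_mem ha hd, _, mul_mem hb hc, Or.inl (aa_mul _ _ _ _)⟩
  inv_mem' := by
    rintro _ ⟨a, ha, b, hb, rfl | rfl⟩
    · exact ⟨_, inv_mem ha, _, inv_mem hb, Or.inl (ddinv _ _)⟩
    · exact ⟨_, inv_mem hb, _, inv_mem ha, Or.inr (aainv _ _)⟩

theorem mem_PP (C : Subgroup Fˣ) (g : G2 F) :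
    g ∈ PP C ↔ ∃ a ∈ C, ∃ b ∈ C, g = dd a b ∨ g = aa a b := Iff.rfl

/-- scalars -/
def ZZ (C : Subgroup Fˣ) : Subgroup (G2 F) where
  carrier := {g | ∃ a ∈ C, g = dd a a}
  one_mem' := ⟨1, one_mem _, dd_one.symm⟩
  mul_mem' := by
    rintro _ _ ⟨a, ha, rfl⟩ ⟨c, hc, rfl⟩
    exact ⟨_, mul_mem ha hc, dd_mul _ _ _ _⟩
  inv_mem' := by
    rintro _ ⟨a, ha, rfl⟩
    exact ⟨_, inv_mem ha, ddinv _ _⟩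

/-- scalars and a square root -/
def RR (C : Subgroup Fˣ) (z : C) : Subgroup (G2 F) where
  carrier := {g | ∃ a ∈ C, g = dd a a ∨ g = aa (z.1 * a) a}
  one_mem' := ⟨1, one_mem _, Or.inl dd_one.symm⟩
  mul_mem' := by
    rintro _ _ ⟨a, ha, rfl | rfl⟩ ⟨c, hc, rfl | rfl⟩
    · exact ⟨_, mul_mem ha hc, Or.inl (dd_mul _ _ _ _)⟩
    · exact ⟨_, mul_mem ha hc, Or.inr (by rw [dd_aa, mul_left_comm])⟩
    · exact ⟨_, mul_mem ha hc, Or.inr (by rw [aa_dd, mul_assoc])⟩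
    · exact ⟨_, mul_mem z.2 (mul_mem ha hc), Or.inl (by rw [aa_mul, mul_assoc, mul_left_comm a])⟩
  inv_mem' := by
    rintro _ ⟨a, ha, rfl | rfl⟩
    · exact ⟨_, inv_mem ha, Or.inl (ddinv _ _)⟩
    · exact ⟨_, inv_mem (mul_mem z.2 ha), Or.inr (by rw [aainv]; simp)⟩

theorem mem_RR (C : Subgroup Fˣ) (z : C) (g : G2 F) :
    g ∈ RR C z ↔ ∃ a ∈ C, g = dd a a ∨ g = aa (z.1 * a) a := Iff.rfl

theorem card_PP (C : Subgroup Fˣ) : Nat.card (PP C) = 2 * (Nat.card C * Nat.card C) := by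
  have e : Nat.card (Bool × C × C) = Nat.card (PP C) := by
    apply Nat.card_eq_of_bijective (fun p : Bool × C × C =>
      (⟨if p.1 then dd p.2.1.1 p.2.2.1 else aa p.2.1.1 p.2.2.1,
        ⟨_, p.2.1.2, _, p.2.2.2, by cases p.1 <;> simp⟩⟩ : PP C))
    constructor
    · rintro ⟨x, a, b⟩ ⟨y, c, d⟩ h
      have h := congrArg Subtype.val h
      cases x <;> cases y <;> simp at h
      · simp [Subtype.ext (aa_inj h).1, Subtype.ext (aa_inj h).2]
      · exact (dd_ne_aa h.symm).elim
      · exact (dd_ne_aa h).elim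
      · simp [Subtype.ext (dd_inj h).1, Subtype.ext (dd_inj h).2]
    · rintro ⟨_, a, ha, b, hb, rfl | rfl⟩
      · exact ⟨⟨true, ⟨a, ha⟩, ⟨b, hb⟩⟩, rfl⟩
      · exact ⟨⟨false, ⟨a, ha⟩, ⟨b, hb⟩⟩, by simp⟩
  rw [← e, Nat.card_prod, Nat.card_prod]; simp

theorem card_RR (C : Subgroup Fˣ) (z : C) : Nat.card (RR C z) = 2 * Nat.card C := by
  have e : Nat.card (Bool × C) = Nat.card (RR C z) := by
    apply Nat.card_eq_of_bijective (fun p : Bool × C =>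
      (⟨if p.1 then dd p.2.1 p.2.1 else aa (z.1 * p.2.1) p.2.1,
        ⟨_, p.2.2, by cases p.1 <;> simp⟩⟩ : RR C z))
    constructor
    · rintro ⟨x, a⟩ ⟨y, c⟩ h
      have h := congrArg Subtype.val h
      cases x <;> cases y <;> simp at h
      · simp [Subtype.ext (aa_inj h).2]
      · exact (dd_ne_aa h.symm).elim
      · exact (dd_ne_aa h).elim
      · simp [Subtype.ext (dd_inj h).2]
    · rintro ⟨_, a, ha, rfl | rfl⟩
      · exact ⟨⟨true, ⟨a, ha⟩⟩, rfl⟩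
      · exact ⟨⟨false, ⟨a, ha⟩⟩, by simp⟩
  rw [← e, Nat.card_prod]; simp

theorem RR_le (C : Subgroup Fˣ) (z : C) : RR C z ≤ PP C := by
  rintro _ ⟨a, ha, rfl | rfl⟩
  · exact ⟨a, ha, a, ha, Or.inl rfl⟩
  · exact ⟨_, mul_mem z.2 ha, a, ha, Or.inr rfl⟩

theorem index_RR [Fintype F] (C : Subgroup Fˣ) (z : C) :
    ((RR C z).subgroupOf (PP C)).index = Nat.card C := by
  have h := ((RR C z).subgroupOf (PP C)).index_mul_card
  rw [Nat.card_congr (Subgroup.subgroupOfEquivOfLe (RR_le C z)).toEquiv, card_RR, card_PP] at h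
  have hp : 0 < 2 * Nat.card C := Nat.mul_pos two_pos Nat.card_pos
  apply Nat.eq_of_mul_eq_mul_right hp
  rw [h]; ring

theorem charZ {A : Type} [Group A] [Finite A] (z : A) (t : ℂ) (ht : t ^ orderOf z = 1) :
    ∃ α : Subgroup.zpowers z →* ℂ, ∀ (n : ℕ) (h : z ^ n ∈ Subgroup.zpowers z), α ⟨z ^ n, h⟩ = t ^ n := by
  have hpos : 0 < orderOf z := orderOf_pos z
  let u : ℂˣ := Units.ofPowEqOne t _ ht hpos.ne'
  let g : Subgroup.zpowers z := ⟨z, Subgroup.mem_zpowers z⟩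
  have hg : ∀ x, x ∈ Subgroup.zpowers g := by
    rintro ⟨_, n, rfl⟩
    exact ⟨n, Subtype.ext (by simp [g])⟩
  have ho : orderOf u ∣ orderOf g := by
    apply orderOf_dvd_of_pow_eq_one
    have : orderOf g = orderOf z := Subgroup.orderOf_mk z _
    rw [this]
    apply Units.ext
    simpa [u] using ht
  refine ⟨(Units.coeHom ℂ).comp (monoidHomOfForallMemZpowers hg ho), fun n h => ?_⟩
  have e : (⟨z ^ n, h⟩ : Subgroup.zpowers z) = g ^ n := Subtype.ext (by simp [g])
  rw [e, MonoidHom.comp_apply, map_pow, monoidHomOfForallMemZpowers_apply_gen]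
  simp [u]

theorem det_dd (a b : Fˣ) : Matrix.GeneralLinearGroup.det (dd a b) = a * b := by
  apply Units.ext
  rw [Matrix.GeneralLinearGroup.val_det_apply, Matrix.det_fin_two]
  simp [dd, m2_00, m2_01, m2_10, m2_11]

theorem det_aa (a b : Fˣ) : Matrix.GeneralLinearGroup.det (aa a b) = -(a * b) := by
  apply Units.ext
  rw [Matrix.GeneralLinearGroup.val_det_apply, Matrix.det_fin_two]
  simp [aa, m2_00, m2_01, m2_10, m2_11]

/-- determinant -/
noncomputable def detC (C : Subgroup Fˣ) (hneg : (-1 : Fˣ) ∈ C) : PP C →* C :=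
  (Matrix.GeneralLinearGroup.det.comp (PP C).subtype).codRestrict C (by
    rintro ⟨_, a, ha, b, hb, rfl | rfl⟩
    · change Matrix.GeneralLinearGroup.det (dd a b) ∈ C
      rw [det_dd]; exact mul_mem ha hb
    · change Matrix.GeneralLinearGroup.det (aa a b) ∈ C
      rw [det_aa, ← neg_one_mul]; exact mul_mem hneg (mul_mem ha hb))

theorem exists_zeta [Fintype F] (hq : Fintype.card F % 4 = 1) :
    ∃ z : Fˣ, orderOf z = 2 ^ (Fintype.card F - 1).factorization 2 := by
  obtain ⟨g, hg⟩ := IsCyclic.exists_ofOrder_eq_natCard (α := Fˣ)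
  rw [card_units_nat] at hg
  have h1 := Nat.ordProj_mul_ordCompl_eq_self (Fintype.card F - 1) 2
  have hq1 := Fintype.one_lt_card (α := F)
  set k := (Fintype.card F - 1) / 2 ^ (Fintype.card F - 1).factorization 2 with hk
  have hk0 : k ≠ 0 := by
    intro h0; rw [h0, mul_zero] at h1; omega
  refine ⟨g ^ k, ?_⟩
  rw [orderOf_pow_of_dvd hk0 (by rw [hg, ← h1]; exact dvd_mul_left _ _), hg]
  exact Nat.div_eq_of_eq_mul_left (Nat.pos_of_ne_zero hk0) h1.symm

end q1


section cusp1
variable {F : Type} [Field F] [Fintype F] {V : Type} [AddCommGroup V] [Module ℂ V]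
    [FiniteDimensional ℂ V] (ρ : Representation ℂ (G2 F) V) [IsIrreducible ρ]

theorem cusp1 (hq : Fintype.card F % 4 = 1) (P : Sylow 2 (G2 F))
    (h : LinearMap.range (pr ρ 1) = ⊥) :
    SI (2 ^ (finrank ℂ V).factorization 2) (fun x : (P : Subgroup (G2 F)) => ρ.character x) := by
  have h2 : (2 : F) ≠ 0 := by
    intro h0
    have hc : CharP F 2 := CharTwo.of_one_ne_zero_of_two_eq_zero one_ne_zero h0
    have := FiniteField.even_card_of_char_two (F := F) (by
      exact ringChar.eq_iff.2 hc)
    omega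
  have hne : (1 : Fˣ) ≠ -1 := by
    intro h
    have h3 : (1 : F) = -1 := by exact congrArg Units.val h
    apply h2; linear_combination h3
  have hq1 := Fintype.one_lt_card (α := F)
  have hdim := cusp_dim ρ h
  rw [hdim]
  obtain ⟨ζ, hζ⟩ := exists_zeta hq
  set a := (Fintype.card F - 1).factorization 2 with ha
  have ha2 : 2 ≤ a := by
    rw [ha, ← Nat.prime_two.pow_dvd_iff_le_factorization (by omega)]
    omega
  obtain ⟨b, hb⟩ : ∃ b, a = b + 2 := ⟨a - 2, by omega⟩
  let C : Subgroup Fˣ := Subgroup.zpowers ζ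
  have hCcard : Nat.card C = 2 ^ a := by rw [← hζ]; exact Nat.card_zpowers ζ
  have hCn : ∀ c ∈ C, ∃ n : ℕ, ζ ^ n = c := by
    intro c hc
    exact mem_powers_iff_mem_zpowers.2 hc
  have hζC : ζ ∈ C := Subgroup.mem_zpowers ζ
  have hneg1 : ζ ^ (2 ^ (b + 1)) = -1 := by
    have e1 : (ζ ^ (2 ^ (b + 1))) * (ζ ^ (2 ^ (b + 1))) = 1 := by
      rw [← pow_add, ← two_mul, ← pow_succ', show b + 1 + 1 = a by omega, ← hζ, pow_orderOf_eq_one]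
    have e2 : ζ ^ (2 ^ (b + 1)) ≠ 1 := by
      intro h0
      have := orderOf_dvd_of_pow_eq_one h0
      rw [hζ, hb] at this
      have := (Nat.pow_dvd_pow_iff_le_right (x := 2) (by norm_num)).1 this
      omega
    have e3 : ((ζ ^ (2 ^ (b + 1)) : Fˣ) : F) * ((ζ ^ (2 ^ (b + 1)) : Fˣ) : F) = 1 :=
      congrArg Units.val e1
    rcases mul_self_eq_one_iff.1 e3 with h4 | h4
    · exact absurd (Units.ext h4) e2
    · exact Units.ext h4
  have hneg : (-1 : Fˣ) ∈ C := by rw [← hneg1]; exact pow_mem hζC _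
  have hcardP : Nat.card (PP C) = 2 ^ (Nat.card (G2 F)).factorization 2 := by
    obtain ⟨k, hk⟩ : ∃ k, Fintype.card F = 4 * k + 1 := ⟨Fintype.card F / 4, by omega⟩
    have hG := card_G2 (F := F) (4 * k) hk
    have ha' : (4 * k).factorization 2 = a := by rw [ha, hk]; simp
    have hk0 : k ≠ 0 := by rintro rfl; omega
    have e1 : Nat.card (G2 F) = ((4 * k + 1) * (2 * k + 1)) * (2 * ((4 * k) * (4 * k))) := by
      rw [hG]; ring
    have o1 : ((4 * k + 1) * (2 * k + 1)).factorization 2 = 0 :=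
      Nat.factorization_eq_zero_of_not_dvd (by
        rw [Nat.prime_two.dvd_mul]; omega)
    have e2 : (Nat.card (G2 F)).factorization 2 = 1 + (a + a) := by
      have f1 := Nat.factorization_mul (a := (4 * k + 1) * (2 * k + 1)) (b := 2 * ((4 * k) * (4 * k)))
        (by positivity) (by positivity)
      have f2 := Nat.factorization_mul (a := 2) (b := (4 * k) * (4 * k)) (by positivity) (by positivity)
      have f3 := Nat.factorization_mul (a := 4 * k) (b := 4 * k) (by positivity) (by positivity)
      rw [e1, f1, f2, f3]
      simp only [Finsupp.add_apply, o1, ha', Nat.prime_two.factorization_self, zero_add]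
    rw [e2, card_PP, hCcard]; ring
  refine transport ρ P (PP C) hcardP _ ?_
  let z : C := ⟨ζ, hζC⟩
  let R := (RR C z).subgroupOf (PP C)
  let Z := (ZZ C).subgroupOf (PP C)
  have hRidx : R.index = 2 ^ a := by rw [← hCcard]; exact index_RR C z
  have := irr_nontrivial ρ
  let σ : Representation ℂ (PP C) V := ρ.comp (PP C).subtype
  rw [← hRidx]
  have hxP : aa ζ 1 ∈ PP C := ⟨ζ, hζC, 1, one_mem _, Or.inr rfl⟩
  have hzP : dd (-1) (-1) ∈ PP C := ⟨_, hneg, _, hneg, Or.inl rfl⟩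
  have hdP : dd 1 (-1) ∈ PP C := ⟨_, one_mem _, _, hneg, Or.inl rfl⟩
  have hex : ∀ g : PP C, ∃ t : ℂ, g ∈ Z → ∀ v, σ g v = t • v := by
    intro g
    by_cases hg : g ∈ Z
    · obtain ⟨c, hc, hgc⟩ := hg
      obtain ⟨t, ht⟩ := central_scalar ρ c
      refine ⟨t, fun _ v => ?_⟩
      rw [← ht, ← hgc]; rfl
    · exact ⟨0, fun h => absurd h hg⟩
  choose ω hω using hex
  -- centralizing elements
  have hcdd : ∀ p r : Fˣ, p ∈ C → r ∈ C → dd p r * aa ζ 1 * (dd p r)⁻¹ ∈ RR C z →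
      r = p ∨ r = -p := by
    intro p r hp hr hm
    rw [ddinv, dd_aa, aa_dd] at hm
    obtain ⟨c, hc, h1 | h1⟩ := hm
    · exact (dd_ne_aa h1.symm).elim
    · obtain ⟨k1, k2⟩ := aa_inj h1
      have k3 : p * r⁻¹ = c := by
        have : ζ * (p * r⁻¹) = ζ * c := by rw [← k1]; simp only [mul_comm, mul_assoc, mul_left_comm]
        exact mul_left_cancel this
      rw [mul_one] at k2
      have k4 : p * p = r * r := by
        have : p * r⁻¹ = r * p⁻¹ := by rw [k3, k2]
        rw [← div_eq_mul_inv, ← div_eq_mul_inv, div_eq_div_iff_mul_eq_mul] at this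
        exact this
      have k5 : (r : F) * r = p * p := congrArg Units.val k4.symm
      rcases mul_self_eq_mul_self_iff.1 k5 with h | h
      · exact Or.inl (Units.ext h)
      · exact Or.inr (Units.ext h)
  have hcdd2 : ∀ p r : Fˣ, p ∈ C → r ∈ C → dd p r * aa ζ 1 * (dd p r)⁻¹ ∈ RR C z →
      dd p r ∈ RR C z ∨ (dd 1 (-1))⁻¹ * dd p r ∈ RR C z := by
    intro p r hp hr hm
    rcases hcdd p r hp hr hm with rfl | rfl
    · exact Or.inl ⟨_, hp, Or.inl rfl⟩
    · right
      refine ⟨p, hp, Or.inl ?_⟩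
      rw [ddinv, dd_mul]; simp
  have hxR : aa ζ 1 ∈ RR C z := ⟨1, one_mem _, Or.inr (by simp [z])⟩
  refine lemmaR σ R Z ⟨aa ζ 1, hxP⟩ ⟨dd (-1) (-1), hzP⟩ ⟨dd 1 (-1), hdP⟩ ?_ ?_ ?_ ?_ ?_ ?_ ?_ ?_ ?_
    ω hω ?_ ((Fintype.card F - 1) / 2 ^ a) ?_ ?_
  · rintro g ⟨c, hc, hgc⟩ y
    apply Subtype.ext
    change g.1 * y.1 = y.1 * g.1
    change g.1 = _ at hgc
    rw [hgc, dd_central]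
  · rintro g ⟨c, hc, hgc⟩
    exact ⟨c, hc, Or.inl hgc⟩
  · exact hxR
  · rintro r ⟨c, hc, hr | hr⟩
    · exact Or.inl ⟨c, hc, hr⟩
    · right
      refine ⟨⟨dd c c, ⟨c, hc, c, hc, Or.inl rfl⟩⟩, ⟨c, hc, rfl⟩, Subtype.ext ?_⟩
      change r.1 = _ at hr
      rw [hr]
      change _ = aa ζ 1 * dd c c
      rw [aa_dd, one_mul]
  · exact ⟨_, hneg, rfl⟩
  · apply Subtype.ext
    change dd (-1) (-1) * dd (-1) (-1) = (1 : G2 F)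
    rw [dd_mul]; simp [dd_one]
  · apply Subtype.ext
    change dd 1 (-1) * aa ζ 1 * (dd 1 (-1))⁻¹ = aa ζ 1 * dd (-1) (-1)
    rw [ddinv, dd_aa, aa_dd, aa_dd]; simp
  · rintro ⟨c, hc, h1 | h1⟩
    · obtain ⟨k1, k2⟩ := dd_inj h1
      exact hne (k1.trans k2.symm)
    · exact dd_ne_aa h1
  · rintro ⟨_, p, hp, r, hr, rfl | rfl⟩ hm
    · exact hcdd2 p r hp hr hm
    · have e : aa p r = dd (p * ζ⁻¹) r * aa ζ 1 := by rw [dd_aa]; simp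
      have hm' : aa p r * aa ζ 1 * (aa p r)⁻¹ ∈ RR C z := hm
      have e2 : aa p r * aa ζ 1 * (aa p r)⁻¹ =
          dd (p * ζ⁻¹) r * aa ζ 1 * (dd (p * ζ⁻¹) r)⁻¹ := by
        rw [e]; group
      rw [e2] at hm'
      rcases hcdd2 _ _ (mul_mem hp (inv_mem hζC)) hr hm' with h1 | h1
      · left
        change aa p r ∈ RR C z
        rw [e]; exact mul_mem h1 hxR
      · right
        change (dd 1 (-1))⁻¹ * aa p r ∈ RR C z
        rw [e, ← mul_assoc]; exact mul_mem h1 hxR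
  · rintro ⟨_, p, hp, r, hr, rfl | rfl⟩ hg
    · by_cases hpr : p = r
      · subst hpr
        exact absurd (show (1 : PP C) * _ * (1 : PP C)⁻¹ ∈ R by
          rw [one_mul, inv_one, mul_one]
          exact ⟨p, hp, Or.inl rfl⟩) (hg 1)
      · exact cusp_dd ρ h p r hpr
    · obtain ⟨n, hn⟩ := hCn _ (mul_mem hp hr)
      rcases Nat.even_or_odd' n with ⟨m, rfl | rfl⟩
      · exact cusp_aa ρ h2 h p r (ζ ^ m) (by rw [← hn, two_mul, pow_add])
      · exfalso
        have hc : ζ ^ m ∈ C := pow_mem hζC m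
        have hy : r * (ζ ^ m)⁻¹ ∈ C := mul_mem hr (inv_mem hc)
        refine hg ⟨dd (r * (ζ ^ m)⁻¹) 1, ⟨_, hy, 1, one_mem _, Or.inl rfl⟩⟩ ?_
        refine ⟨ζ ^ m, hc, Or.inr ?_⟩
        change dd (r * (ζ ^ m)⁻¹) 1 * aa p r * (dd (r * (ζ ^ m)⁻¹) 1)⁻¹ = aa (ζ * ζ ^ m) (ζ ^ m)
        rw [ddinv, dd_aa, aa_dd]
        congr 1
        · have : r * (ζ ^ m)⁻¹ * p * 1⁻¹ = (p * r) * (ζ ^ m)⁻¹ := by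
            rw [inv_one, mul_one, mul_right_comm, mul_comm r p]
          rw [this, ← hn, mul_inv_eq_iff_eq_mul, two_mul, pow_succ, pow_add]
          simp only [mul_comm, mul_left_comm]
        · simp
  · rw [hdim, hRidx, mul_comm]
    exact (Nat.ordProj_mul_ordCompl_eq_self (Fintype.card F - 1) 2).symm
  · intro hω1
    -- multiplicativity on scalars
    obtain ⟨v, hv⟩ := exists_ne (0 : V)
    let sc : C → PP C := fun c => ⟨dd c.1 c.1, ⟨_, c.2, _, c.2, Or.inl rfl⟩⟩
    have hsc : ∀ c, sc c ∈ Z := fun c => ⟨c.1, c.2, rfl⟩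
    have hpow : ∀ n : ℕ, ω (sc (z ^ n)) = ω (sc z) ^ n := by
      intro n
      apply smul_left_injective ℂ hv
      simp only
      rw [← hω _ (hsc _)]
      induction n with
      | zero =>
        have : sc (z ^ 0) = 1 := Subtype.ext (by simp [sc, dd_one])
        rw [this]; simp
      | succ n ih =>
        have : sc (z ^ (n + 1)) = sc z * sc (z ^ n) := Subtype.ext (by
          simp [sc, dd_mul, pow_succ'])
        rw [this, map_mul, Module.End.mul_apply, ih, map_smul, hω _ (hsc z), smul_smul, pow_succ]
    obtain ⟨t, ht⟩ := IsAlgClosed.exists_pow_nat_eq (ω (sc z)) (n := 2) (by norm_num)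
    have hωn : ω (sc z) ^ (2 ^ (b + 1)) = 1 := by
      rw [← hpow]
      have : sc (z ^ (2 ^ (b + 1))) = ⟨dd (-1) (-1), hzP⟩ := Subtype.ext (by
        simp only [sc, SubmonoidClass.coe_pow, z, hneg1])
      rw [this]; exact hω1
    have htn : t ^ orderOf ζ = 1 := by
      rw [hζ, hb, show b + 2 = 1 + (b + 1) by ring, pow_add, pow_one, pow_mul, ht, hωn]
    have htn' : (-t) ^ orderOf ζ = 1 := by
      rw [Even.neg_pow _ t, htn]
      rw [hζ, hb]
      exact ⟨2 ^ (b + 1), by ring⟩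
    obtain ⟨α, hα⟩ := charZ ζ t htn
    obtain ⟨α', hα'⟩ := charZ ζ (-t) htn'
    have hZl : ∀ (β : C →* ℂ) (u : ℂ), (∀ (n : ℕ) (h : ζ ^ n ∈ C), β ⟨ζ ^ n, h⟩ = u ^ n) →
        u ^ 2 = ω (sc z) → ∀ y ∈ Z, β (detC C hneg y) = ω y := by
      rintro β u hβ hu y ⟨c, hc, hy⟩
      obtain ⟨n, rfl⟩ := hCn c hc
      have e1 : y = sc (z ^ n) := Subtype.ext hy
      rw [e1, hpow, ← hu, ← pow_mul]
      have e2 : detC C hneg (sc (z ^ n)) = ⟨ζ ^ (2 * n), pow_mem hζC _⟩ := by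
        apply Subtype.ext
        change Matrix.GeneralLinearGroup.det (dd _ _) = ζ ^ (2 * n)
        rw [det_dd, two_mul, pow_add]
        rfl
      rw [e2, hβ]
    refine ⟨α.comp (detC C hneg), α'.comp (detC C hneg), hZl α t hα ht,
      hZl α' (-t) hα' (by rw [neg_sq, ht]), ?_⟩
    have e3 : detC C hneg ⟨aa ζ 1, hxP⟩ = ⟨ζ ^ (2 ^ (b + 1) + 1), pow_mem hζC _⟩ := by
      apply Subtype.ext
      change Matrix.GeneralLinearGroup.det (aa ζ 1) = ζ ^ (2 ^ (b + 1) + 1)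
      rw [det_aa, pow_succ, hneg1]; simp
    rw [MonoidHom.comp_apply, MonoidHom.comp_apply, e3, hα, hα']
    apply Odd.neg_pow
    exact ⟨2 ^ b, by ring⟩

end cusp1

theorem strong_form_for_GL2
    (q : ℕ) (hq : IsPrimePow q) (hodd : Odd q)
    (F : Type) [Field F] [Fintype F] (hF : Fintype.card F = q)
    (P : Sylow 2 (Matrix.GeneralLinearGroup (Fin 2) F)) :
    ∀ (V : FDRep ℂ (Matrix.GeneralLinearGroup (Fin 2) F)), CategoryTheory.Simple V →
      SumInducedProperty 2 (P : Subgroup (Matrix.GeneralLinearGroup (Fin 2) F))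
        V.character (Module.finrank ℂ V) := by
  intro V hV
  have hirr : IsIrreducible V.ρ := isIrred_of_simple V hV
  have key : SI (2 ^ (finrank ℂ V).factorization 2)
      (fun x : (P : Subgroup (G2 F)) => Representation.character V.ρ x) := by
    subst hF
    by_cases h : LinearMap.range (pr V.ρ 1) = ⊥
    · rcases (show Fintype.card F % 4 = 1 ∨ Fintype.card F % 4 = 3 by
        obtain ⟨k, hk⟩ := hodd; omega) with h1 | h1
      · exact cusp1 V.ρ h1 P h
      · exact cusp3 V.ρ h1 P h
    · exact noncusp V.ρ hodd P h
  obtain ⟨n, Q, l, h1, h2, h3⟩ := key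
  exact ⟨n, Q, l, h1, h2, fun x => by
    have := h3 x
    convert this using 1
    rfl⟩
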